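/- Let s be an even integer with s ≥ 6, N ≥ 2s, ν ≥ π, and let C = {x_1,…,x_M} ⊂ SO(3) have separation ρ(C) ≥ ν/(N+1). Suppose there is a constant b > 3 + c_s/4 with ν^s > b·C_{2,s}/c_s, where c_s = 0.999/(2(s+1)) and C_{2,s} = 124·c_{2,s}·ζ(s−2). Then the interpolation matrix K is invertible, and for every u ∈ {−1,1}^M the unique solution α = (α_0,α_1,α_2,α_3) of Kα = (u,0,0,0)ᵀ satisfies ‖α_0‖_∞ ≤ 1 + c_s/(4(b−3)−c_s) and ‖α_j‖_∞ ≤ 2/((4(b−3)−c_s)(N+1)) for j = 1,2,3; moreover, for every index i with u_i = 1 one has α_{0,i} ≥ 1 − c_s/(4(b−3)−c_s). -/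

import Mathlib

noncomputable section

abbrev Mat3 := Matrix (Fin 3) (Fin 3) ℝ

/-- membership in SO(3) -/
def IsSO3 (x : Mat3) : Prop := x.transpose * x = 1 ∧ x.det = 1

/-- rotation angle -/
def rotAngle (x : Mat3) : ℝ := Real.arccos ((Matrix.trace x - 1) / 2)

/-- generators of so(3) -/
def Lgen : Fin 3 → Mat3 :=
  ![!![0, 0, 0; 0, 0, -1; 0, 1, 0],
    !![0, 0, 1; 0, 0, 0; -1, 0, 0],
    !![0, -1, 0; 1, 0, 0; 0, 0, 0]]

/-- derivative in the first variable along generator `i` -/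
def Xx (i : Fin 3) (f : Mat3 → Mat3 → ℝ) : Mat3 → Mat3 → ℝ :=
  fun x y => deriv (fun t : ℝ => f (x * NormedSpace.exp (t • Lgen i)) y) 0

/-- derivative in the second variable along generator `i` -/
def Xy (i : Fin 3) (f : Mat3 → Mat3 → ℝ) : Mat3 → Mat3 → ℝ :=
  fun x y => deriv (fun t : ℝ => f x (y * NormedSpace.exp (t • Lgen i))) 0

/-- iterated integrals of the sign of the Chebyshev polynomial: the perfect B-spline chain -/
def fspline (s : ℕ) : ℕ → ℝ → ℝ
  | 0 => fun x => (-1 : ℝ) ^ (s - 1) * Real.sign ((Polynomial.Chebyshev.U ℝ ((s : ℤ) - 1)).eval x)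
  | (k + 1) => fun x => ∫ t in (-1 : ℝ)..x, fspline s k t

/-- the scaled perfect B-spline g̃_{s-1} -/
def gtilde (s : ℕ) (x : ℝ) : ℝ := fspline s (s - 1) (2 * x)

/-- discrete norm ‖g̃‖_{1,N} -/
def gnorm (s N : ℕ) : ℝ :=
  ∑ k ∈ Finset.Icc (-(N : ℤ)) (N : ℤ), gtilde s ((k : ℝ) / (2 * ((N : ℝ) + 1)))

/-- the trigonometric kernel σ̃_N (real-valued) -/
def sigmaT (s N : ℕ) (t : ℝ) : ℝ :=
  ((1 / (gnorm s N : ℂ)) *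
      ∑ k ∈ Finset.Icc (-(N : ℤ)) (N : ℤ),
        (gtilde s ((k : ℝ) / (2 * ((N : ℝ) + 1))) : ℂ) * Complex.exp ((k : ℂ) * t * Complex.I)).re

/-- the zonal kernel σ_N on SO(3) -/
def sigmaK (s N : ℕ) (x y : Mat3) : ℝ := sigmaT s N (rotAngle (y⁻¹ * x))

/-- rotation axis components -/
def axisComp : Fin 3 → Mat3 → ℝ :=
  ![fun x => (x 2 1 - x 1 2) / (2 * Real.sin (rotAngle x)),
    fun x => (x 0 2 - x 2 0) / (2 * Real.sin (rotAngle x)),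
    fun x => (x 1 0 - x 0 1) / (2 * Real.sin (rotAngle x))]

/-- Levi-Civita symbol on `Fin 3` -/
def eps3 (a b c : Fin 3) : ℝ :=
  if (a, b, c) = (0, 1, 2) ∨ (a, b, c) = (1, 2, 0) ∨ (a, b, c) = (2, 0, 1) then 1
  else if (a, b, c) = (2, 1, 0) ∨ (a, b, c) = (1, 0, 2) ∨ (a, b, c) = (0, 2, 1) then -1
  else 0

/-- constants c_{l,s} -/
def cConst : ℕ → ℕ → ℝ
  | 0, s => 1.02 * (Nat.factorial (s - 1)) * 2 ^ s * s
  | 1, s => 1.02 * (Nat.factorial (s - 1)) * 2 ^ s * (2 * s)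
  | 2, s => 1.02 * (Nat.factorial (s - 1)) * 2 ^ s * (4 * s + 1)
  | _, s => 1.02 * (Nat.factorial (s - 1)) * 2 ^ s * (9 * s - 2)

/-- ζ(m) for natural m -/
def zetaNat (m : ℕ) : ℝ := ∑' n : ℕ, (1 : ℝ) / ((n : ℝ) + 1) ^ m

/-- constants C_{i,s} = 124 c_{i,s} ζ(s-2) -/
def CConst (i s : ℕ) : ℝ := 124 * cConst i s * zetaNat (s - 2)

end

open scoped Real

/-- block selector: 0 ↦ kernel, p ↦ derivative along generator p−1 -/
def toOp : Fin 4 → Option (Fin 3) := ![none, some 0, some 1, some 2]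

/-- the (p,q) block kernel of the interpolation matrix -/
noncomputable def Kblock (s N : ℕ) (p q : Fin 4) : Mat3 → Mat3 → ℝ :=
  match toOp p, toOp q with
  | none, none => sigmaK s N
  | none, some j => Xx j (sigmaK s N)
  | some i, none => Xy i (sigmaK s N)
  | some i, some j => Xx j (Xy i (sigmaK s N))

/-- the 4M × 4M interpolation matrix K -/
noncomputable def Kmat (s N : ℕ) {M : ℕ} (x : Fin M → Mat3) :
    Matrix (Fin 4 × Fin M) (Fin 4 × Fin M) ℝ :=
  Matrix.of fun pa qb => Kblock s N pa.1 qb.1 (x pa.2) (x qb.2)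

/-- right-hand side (u,0,0,0)ᵀ -/
def rhsVec {M : ℕ} (u : Fin M → ℝ) : Fin 4 × Fin M → ℝ :=
  fun pa => if pa.1 = 0 then u pa.2 else 0

/-!
The perfect B-spline is the Peano kernel of an alternating sum over the Chebyshev knots, so its
Fourier transform and those of its moments decay like `|w| ^ (-s)` with explicit constants. By
Poisson summation the kernel and its derivatives along the generators inherit this decay in
`(N + 1) * ω`, while the diagonal value of the second derivatives is of exact order
`(N + 1) ^ 2`. The logarithmic chart of the unit quaternions does not decrease distances on half
of the sphere, so a volume bound for balls in `ℝ³` controls the number of nodes in each annulus,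
and the total off-diagonal decay is a multiple of `ζ (s - 2) / ν ^ s`. Weighting the function block
by `1 / 2` and the derivative blocks by `N + 1` then makes `K` diagonally dominant.
-/

section PerfectSpline

open Finset

variable {E : Type*} [NormedAddCommGroup E] [NormedSpace ℝ E] {s n : ℕ}

/-- The `j`-th Chebyshev knot of order `s`. The indices `j < 2 * s` list `±1` once and every other
knot twice. -/
noncomputable def chebKnot (s j : ℕ) : ℝ := Real.cos (j * π / s)

lemma neg_one_le_chebKnot (s j : ℕ) : -1 ≤ chebKnot s j := Real.neg_one_le_cos _

lemma chebKnot_le_one (s j : ℕ) : chebKnot s j ≤ 1 := Real.cos_le_one _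

/-- The functional that sums a function over the Chebyshev knots with alternating signs. The perfect
B-spline is its Peano kernel. -/
noncomputable def altKnotSum (s : ℕ) (f : ℝ → E) : E :=
  ∑ j ∈ range (2 * s), (-1 : ℝ) ^ j • f (chebKnot s j)

lemma altKnotSum_congr {f g : ℝ → E} (h : Set.EqOn f g (Set.Icc (-1) 1)) :
    altKnotSum s f = altKnotSum s g :=
  sum_congr rfl fun j _ => by rw [h ⟨neg_one_le_chebKnot s j, chebKnot_le_one s j⟩]

lemma altKnotSum_sub (f g : ℝ → E) :
    altKnotSum s (fun x => f x - g x) = altKnotSum s f - altKnotSum s g := by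
  simp only [altKnotSum, smul_sub, sum_sub_distrib]

lemma altKnotSum_sum {ι : Type*} (S : Finset ι) (f : ι → ℝ → E) :
    altKnotSum s (fun x => ∑ i ∈ S, f i x) = ∑ i ∈ S, altKnotSum s (f i) := by
  simp only [altKnotSum, smul_sum]
  exact sum_comm

lemma altKnotSum_const_smul (c : ℝ) (f : ℝ → E) :
    altKnotSum s (fun x => c • f x) = c • altKnotSum s f := by
  simp only [altKnotSum, smul_sum, smul_comm c]

lemma altKnotSum_smul_const (f : ℝ → ℝ) (v : E) :
    altKnotSum s (fun x => f x • v) = altKnotSum s f • v := by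
  simp only [altKnotSum, sum_smul, smul_assoc]

lemma norm_altKnotSum_le {f : ℝ → E} {B : ℝ} (h : ∀ x ∈ Set.Icc (-1 : ℝ) 1, ‖f x‖ ≤ B) :
    ‖altKnotSum s f‖ ≤ 2 * s * B := by
  refine (norm_sum_le_of_le _ fun j _ => ?_).trans_eq (b := ∑ _j ∈ range (2 * s), B) (by simp)
  rw [norm_smul, norm_pow, norm_neg, norm_one, one_pow, one_mul]
  exact h _ ⟨neg_one_le_chebKnot s j, chebKnot_le_one s j⟩

lemma sum_neg_one_pow_mul_exp (hs : s ≠ 0) (k : ℤ) :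
    ∑ j ∈ range (2 * s), (-1 : ℂ) ^ j * Complex.exp (k * (j * π / s) * Complex.I) =
      if (2 * s : ℤ) ∣ k + s then (2 * s : ℂ) else 0 := by
  have hs' : (s : ℂ) ≠ 0 := Nat.cast_ne_zero.2 hs
  have hprim := Complex.isPrimitiveRoot_exp (2 * s) (by omega)
  set z := Complex.exp (2 * π * Complex.I / ((2 * s : ℕ) : ℂ)) with hz
  have hterm (j : ℕ) : (-1 : ℂ) ^ j * Complex.exp (k * (j * π / s) * Complex.I) =
      (z ^ (k + s)) ^ j := by
    rw [← Complex.exp_pi_mul_I, ← Complex.exp_nat_mul, ← Complex.exp_add, hz, ← Complex.exp_int_mul,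
      ← Complex.exp_nat_mul]
    congr 1
    push_cast
    field_simp
    ring
  have hdvd : (2 * s : ℤ) ∣ k + s ↔ z ^ (k + s) = 1 := by
    rw [hprim.zpow_eq_one_iff_dvd]; push_cast; rfl
  simp_rw [hterm, hdvd]
  split_ifs with h
  · simp [h]
  · rw [geom_sum_eq h, ← zpow_natCast, zpow_comm, zpow_natCast, hprim.pow_eq_one, one_zpow,
      sub_self, zero_div]

lemma ofReal_cos_pow_eq_sum_exp (n : ℕ) (θ : ℝ) :
    ((Real.cos θ ^ n : ℝ) : ℂ) = ∑ m ∈ range (n + 1),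
      (n.choose m : ℂ) / 2 ^ n * Complex.exp ((n - 2 * m : ℤ) * θ * Complex.I) := by
  rw [Complex.ofReal_pow, Complex.ofReal_cos, Complex.cos, div_pow, add_comm, add_pow, sum_div]
  refine sum_congr rfl fun m hm => ?_
  rw [← Complex.exp_nat_mul, ← Complex.exp_nat_mul, ← Complex.exp_add, div_mul_eq_mul_div, mul_comm]
  congr 3
  push_cast [Nat.cast_sub (Nat.lt_succ_iff.1 (mem_range.1 hm))]
  ring

lemma altKnotSum_pow_eq_sum_choose (hs : s ≠ 0) (n : ℕ) :
    altKnotSum s (fun x => x ^ n) = 2 * s / 2 ^ n * ∑ m ∈ range (n + 1),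
      if (2 * s : ℤ) ∣ (n - 2 * m : ℤ) + s then (n.choose m : ℝ) else 0 := by
  apply Complex.ofReal_injective
  simp only [altKnotSum, smul_eq_mul, Complex.ofReal_sum, Complex.ofReal_mul, chebKnot,
    ofReal_cos_pow_eq_sum_exp, mul_sum]
  rw [sum_comm]
  refine sum_congr rfl fun m _ => ?_
  have h := congrArg ((n.choose m : ℂ) / 2 ^ n * ·) (sum_neg_one_pow_mul_exp hs (n - 2 * m))
  simp only [mul_sum] at h
  push_cast [apply_ite ((↑) : ℝ → ℂ)] at h ⊢
  refine (sum_congr rfl fun j _ => by ring).trans (h.trans ?_)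
  split_ifs <;> ring

lemma two_mul_dvd_sub_add_iff {s n m : ℕ} (hm : m ≤ n) (hn : n < 3 * s) :
    (2 * s : ℤ) ∣ (n - 2 * m : ℤ) + s ↔ n + s = 2 * m ∨ n = 2 * m + s := by
  constructor
  · rintro ⟨c, hc⟩
    have hlo : (2 * s : ℤ) * (-1) < 2 * s * c := by omega
    have hhi : (2 * s : ℤ) * c < 2 * s * 2 := by omega
    have h1 : -1 < c := lt_of_mul_lt_mul_left hlo (by omega)
    have h2 : c < 2 := lt_of_mul_lt_mul_left hhi (by omega)
    obtain rfl | rfl : c = 0 ∨ c = 1 := by omega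
    all_goals omega
  · rintro (h | h)
    · exact ⟨0, by omega⟩
    · exact ⟨1, by omega⟩

lemma altKnotSum_pow_eq_zero (hn : n < s) : altKnotSum s (fun x => x ^ n) = 0 := by
  rw [altKnotSum_pow_eq_sum_choose (by omega), sum_eq_zero, mul_zero]
  intro m hm
  have := mem_range.1 hm
  rw [if_neg]
  rw [two_mul_dvd_sub_add_iff] <;> omega

lemma altKnotSum_pow_add_two_mul {r : ℕ} (hr : r < s) :
    altKnotSum s (fun x => x ^ (s + 2 * r)) = 4 * s * (s + 2 * r).choose r / 2 ^ (s + 2 * r) := by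
  rw [altKnotSum_pow_eq_sum_choose (by omega)]
  have hpair : ({r, s + r} : Finset ℕ) ⊆ range (s + 2 * r + 1) := by
    simp only [insert_subset_iff, singleton_subset_iff, mem_range]; omega
  rw [← sum_subset hpair, sum_pair (by omega), if_pos, if_pos,
    ← Nat.choose_symm_of_eq_add (show s + 2 * r = s + r + r by omega)]
  · ring
  · rw [two_mul_dvd_sub_add_iff] <;> omega
  · rw [two_mul_dvd_sub_add_iff] <;> omega
  · intro m hm hm'
    have := mem_range.1 hm
    simp only [mem_insert, mem_singleton] at hm'
    rw [if_neg]
    rw [two_mul_dvd_sub_add_iff] <;> omega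

lemma altKnotSum_eval_eq_zero {p : Polynomial ℝ} (hp : p.natDegree < s) :
    altKnotSum s (fun x => p.eval x) = 0 := by
  simp_rw [Polynomial.eval_eq_sum_range, altKnotSum_sum, ← smul_eq_mul, altKnotSum_const_smul]
  refine sum_eq_zero fun k hk => ?_
  rw [altKnotSum_pow_eq_zero (by have := mem_range.1 hk; omega), smul_zero]

lemma altKnotSum_sub_pow_eq_zero (hn : n < s) (y : ℝ) :
    altKnotSum s (fun x => (x - y) ^ n) = 0 := by
  have h := altKnotSum_eval_eq_zero (p := (Polynomial.X - Polynomial.C y) ^ n)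
    (show _ < s by simpa using hn)
  simpa only [Polynomial.eval_pow, Polynomial.eval_sub, Polynomial.eval_X,
    Polynomial.eval_C] using h

/-- The truncated power `(x - ξ)₊ ^ n / n!`, an `n`-fold antiderivative of the indicator of
`(ξ, ∞)`. -/
noncomputable def truncPow (n : ℕ) (ξ x : ℝ) : ℝ :=
  if ξ < x then (x - ξ) ^ n / n.factorial else 0

lemma truncPow_of_le {ξ x : ℝ} (h : x ≤ ξ) : truncPow n ξ x = 0 := if_neg h.not_gt

lemma truncPow_of_ge (hn : n ≠ 0) {ξ x : ℝ} (h : ξ ≤ x) :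
    truncPow n ξ x = (x - ξ) ^ n / n.factorial := by
  rcases h.eq_or_lt with rfl | h
  · simp [truncPow, hn]
  · exact if_pos h

lemma continuous_truncPow (hn : n ≠ 0) (ξ : ℝ) : Continuous (truncPow n ξ) := by
  have h : truncPow n ξ = fun x => max (x - ξ) 0 ^ n / n.factorial := by
    ext x
    rcases le_total x ξ with h | h
    · simp [truncPow_of_le h, max_eq_right (sub_nonpos.2 h), hn]
    · rw [truncPow_of_ge hn h, max_eq_left (sub_nonneg.2 h)]
  rw [h]
  fun_prop

lemma truncPow_smul_eq_indicator (n : ℕ) (ξ : ℝ) (f : ℝ → E) :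
    (fun t => truncPow n ξ t • f t) =
      (Set.Ioi ξ).indicator fun t => ((t - ξ) ^ n / n.factorial) • f t := by
  ext t
  by_cases h : ξ < t <;> simp [truncPow, h]

lemma intervalIntegrable_truncPow_smul (n : ℕ) (ξ : ℝ) {f : ℝ → E} (hf : Continuous f) (a b : ℝ) :
    IntervalIntegrable (fun t => truncPow n ξ t • f t) MeasureTheory.volume a b := by
  have h : Continuous fun t => ((t - ξ) ^ n / n.factorial) • f t := by fun_prop
  rw [truncPow_smul_eq_indicator]
  exact ⟨(h.intervalIntegrable a b).1.indicator measurableSet_Ioi,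
    (h.intervalIntegrable a b).2.indicator measurableSet_Ioi⟩

lemma integral_truncPow_smul (n : ℕ) {a b ξ : ℝ} (hab : a ≤ b) (hξ : a ≤ ξ) (f : ℝ → E) :
    ∫ t in a..b, truncPow n ξ t • f t =
      ∫ t in Set.Ioc ξ b, ((t - ξ) ^ n / n.factorial) • f t := by
  rw [truncPow_smul_eq_indicator, intervalIntegral.integral_of_le hab,
    MeasureTheory.setIntegral_indicator measurableSet_Ioi, Set.Ioc_inter_Ioi, max_eq_right hξ]

lemma integral_truncPow (n : ℕ) {a b ξ : ℝ} (hab : a ≤ b) (hξ : a ≤ ξ) :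
    ∫ t in a..b, truncPow n ξ t = truncPow (n + 1) ξ b := by
  have h := integral_truncPow_smul n hab hξ (1 : ℝ → ℝ)
  simp only [Pi.one_apply, smul_eq_mul, mul_one] at h
  rw [h]
  rcases le_total b ξ with hb | hb
  · rw [Set.Ioc_eq_empty hb.not_gt, truncPow_of_le hb, MeasureTheory.setIntegral_empty]
  · rw [← intervalIntegral.integral_of_le hb, intervalIntegral.integral_div,
      intervalIntegral.integral_comp_sub_right (fun t => t ^ n) ξ, integral_pow,
      truncPow_of_ge n.succ_ne_zero hb, Nat.factorial_succ]
    push_cast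
    field_simp
    simp

/-- The `n`-th integral of the alternating step function with jumps at the Chebyshev knots. For
`n = s - 1` it is the perfect B-spline, in the form in which its moments can be computed. -/
noncomputable def altSpline (s n : ℕ) (x : ℝ) : ℝ := altKnotSum s fun ξ => truncPow n ξ x

lemma altSpline_eq_sum (s n : ℕ) (x : ℝ) :
    altSpline s n x = ∑ j ∈ range (2 * s), (-1 : ℝ) ^ j * truncPow n (chebKnot s j) x := rfl

lemma altSpline_of_le_neg_one {x : ℝ} (hx : x ≤ -1) : altSpline s n x = 0 := by
  rw [altSpline_eq_sum]
  exact sum_eq_zero fun j _ => by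
    rw [truncPow_of_le (hx.trans (neg_one_le_chebKnot s j)), mul_zero]

lemma altSpline_of_one_le (hn : n ≠ 0) (hns : n < s) {x : ℝ} (hx : 1 ≤ x) :
    altSpline s n x = 0 := by
  have h : Set.EqOn (fun ξ => truncPow n ξ x)
      (fun ξ => ((-1) ^ n / n.factorial : ℝ) • (ξ - x) ^ n) (Set.Icc (-1) 1) := fun ξ hξ => by
    simp only [truncPow_of_ge hn (hξ.2.trans hx), smul_eq_mul]
    rw [← neg_sub, neg_pow]
    ring
  rw [altSpline, altKnotSum_congr h, altKnotSum_const_smul, altKnotSum_sub_pow_eq_zero hns,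
    smul_zero]

lemma continuous_altSpline (hn : n ≠ 0) : Continuous (altSpline s n) :=
  continuous_finsetSum (range (2 * s)) fun j _ =>
    (continuous_truncPow hn (chebKnot s j)).const_smul ((-1 : ℝ) ^ j)

lemma integral_altSpline {x : ℝ} (hx : -1 ≤ x) :
    ∫ t in (-1)..x, altSpline s n t = altSpline s (n + 1) x := by
  simp only [altSpline_eq_sum]
  rw [intervalIntegral.integral_finsetSum]
  · refine sum_congr rfl fun j _ => ?_
    rw [intervalIntegral.integral_const_mul, integral_truncPow n hx (neg_one_le_chebKnot s j)]
  · intro j _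
    simpa [mul_comm] using intervalIntegrable_truncPow_smul n (chebKnot s j)
      (continuous_const (y := (-1 : ℝ) ^ j)) (-1) x

lemma chebKnot_two_mul_sub {j : ℕ} (hj : j ≤ 2 * s) : chebKnot s (2 * s - j) = chebKnot s j := by
  rcases eq_or_ne s 0 with rfl | hs
  · simp [chebKnot]
  · rw [chebKnot, chebKnot, ← Real.cos_two_pi_sub]
    congr 1
    push_cast [Nat.cast_sub hj]
    field_simp
    ring

lemma chebKnot_lt_cos_iff {j m : ℕ} {θ : ℝ} (hθ : θ ∈ Set.Icc 0 π) (hm : m * π < s * θ)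
    (hm' : s * θ < (m + 1) * π) (hj : j ≤ s) : chebKnot s j < Real.cos θ ↔ m < j := by
  have hs : (0 : ℝ) < s := by
    by_contra! h
    nlinarith [hθ.1, Real.pi_pos, mul_nonneg m.cast_nonneg Real.pi_pos.le]
  have hmem : j * π / s ∈ Set.Icc 0 π := by
    refine ⟨by positivity, ?_⟩
    rw [div_le_iff₀ hs, mul_comm]
    gcongr
  rw [chebKnot, Real.strictAntiOn_cos.lt_iff_gt hmem hθ, lt_div_iff₀ hs, mul_comm θ]
  constructor
  · intro h
    exact_mod_cast lt_of_mul_lt_mul_right (hm.trans h) Real.pi_pos.le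
  · intro h
    have : (m + 1 : ℝ) ≤ j := by exact_mod_cast h
    exact hm'.trans_le (by gcongr)

lemma altSpline_zero_cos {m : ℕ} {θ : ℝ} (hθ : θ ∈ Set.Icc 0 π) (hm : m * π < s * θ)
    (hm' : s * θ < (m + 1) * π) : altSpline s 0 (Real.cos θ) = (-1) ^ (m + 1) := by
  have hms : m < s := by
    have h := hm.trans_le (mul_le_mul_of_nonneg_left hθ.2 s.cast_nonneg)
    exact_mod_cast lt_of_mul_lt_mul_right h Real.pi_pos.le
  have hknot (j : ℕ) (hj : j < 2 * s) :
      chebKnot s j < Real.cos θ ↔ m + 1 ≤ j ∧ j < 2 * s - m := by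
    rcases le_or_gt j s with hjs | hjs
    · rw [chebKnot_lt_cos_iff hθ hm hm' hjs]; omega
    · rw [← chebKnot_two_mul_sub hj.le, chebKnot_lt_cos_iff hθ hm hm' (by omega)]; omega
  have hIco : Ico (m + 1) (2 * s - m) =
      (range (2 * s)).filter fun j => m + 1 ≤ j ∧ j < 2 * s - m := by
    ext j; simp only [mem_Ico, mem_filter, mem_range]; omega
  calc altSpline s 0 (Real.cos θ) = ∑ j ∈ Ico (m + 1) (2 * s - m), (-1 : ℝ) ^ j := by
        rw [altSpline_eq_sum, hIco, sum_filter]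
        refine sum_congr rfl fun j hj => ?_
        simp [truncPow, hknot j (mem_range.1 hj)]
    _ = (-1) ^ (m + 1) * ∑ i ∈ range (2 * (s - m - 1) + 1), (-1) ^ i := by
        rw [sum_Ico_eq_sum_range, mul_sum, show 2 * s - m - (m + 1) = 2 * (s - m - 1) + 1 by omega]
        exact sum_congr rfl fun i _ => pow_add ..
    _ = (-1) ^ (m + 1) := by
        rw [neg_one_geom_sum, if_neg (Nat.not_even_two_mul_add_one _), mul_one]

lemma sign_chebyshev_U_cos {m : ℕ} {θ : ℝ} (hθ : θ ∈ Set.Ioo 0 π) (hm : m * π < s * θ)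
    (hm' : s * θ < (m + 1) * π) :
    Real.sign ((Polynomial.Chebyshev.U ℝ (s - 1)).eval (Real.cos θ)) = (-1) ^ m := by
  have hsin : 0 < Real.sin θ := Real.sin_pos_of_mem_Ioo hθ
  have hpos : 0 < Real.sin (s * θ - m * π) / Real.sin θ :=
    div_pos (Real.sin_pos_of_pos_of_lt_pi (by linarith) (by linarith)) hsin
  have hU : (Polynomial.Chebyshev.U ℝ (s - 1)).eval (Real.cos θ) =
      (-1) ^ m * (Real.sin (s * θ - m * π) / Real.sin θ) := by
    rw [Real.sin_sub_nat_mul_pi, mul_div_assoc', ← mul_assoc, ← mul_pow, neg_one_mul, neg_neg,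
      one_pow, one_mul, eq_div_iff hsin.ne', Polynomial.Chebyshev.U_real_cos]
    push_cast
    ring_nf
  rw [hU]
  rcases neg_one_pow_eq_or ℝ m with h | h
  · rw [h, one_mul, Real.sign_of_pos hpos]
  · rw [h, neg_one_mul, Real.sign_of_neg (neg_neg_of_pos hpos)]

lemma fspline_zero_eq_altSpline (hs : s ≠ 0) (hev : Even s) {x : ℝ} (hx : x ∈ Set.Ioo (-1) 1)
    (hk : ∀ j < 2 * s, chebKnot s j ≠ x) : fspline s 0 x = altSpline s 0 x := by
  have hs' : (0 : ℝ) < s := Nat.cast_pos.2 (Nat.pos_of_ne_zero hs)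
  obtain ⟨θ, hθ, rfl⟩ : ∃ θ ∈ Set.Ioo 0 π, Real.cos θ = x :=
    ⟨Real.arccos x, ⟨Real.arccos_pos.2 hx.2, (Real.arccos_le_pi x).lt_of_ne fun h => by
      linarith [Real.cos_arccos hx.1.le hx.2.le, h ▸ Real.cos_pi, hx.1]⟩,
      Real.cos_arccos hx.1.le hx.2.le⟩
  obtain ⟨m, hm, hm'⟩ : ∃ m : ℕ, m * π ≤ s * θ ∧ s * θ < (m + 1) * π :=
    ⟨⌊s * θ / π⌋₊, (le_div_iff₀ Real.pi_pos).1 (Nat.floor_le (div_nonneg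
      (mul_nonneg hs'.le hθ.1.le) Real.pi_pos.le)),
      (div_lt_iff₀ Real.pi_pos).1 (Nat.lt_floor_add_one _)⟩
  have hms : m < s := by
    have h := hm.trans_lt (mul_lt_mul_of_pos_left hθ.2 hs')
    exact_mod_cast lt_of_mul_lt_mul_right h Real.pi_pos.le
  have hm_lt : m * π < s * θ := hm.lt_of_ne fun h => hk m (by omega) (by
    rw [chebKnot, h, mul_div_cancel_left₀ _ hs'.ne'])
  have hodd : Odd (s - 1) := Nat.Even.sub_odd (Nat.pos_of_ne_zero hs) hev odd_one
  rw [altSpline_zero_cos (Set.Ioo_subset_Icc_self hθ) hm_lt hm', pow_succ',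
    ← sign_chebyshev_U_cos hθ hm_lt hm', ← hodd.neg_one_pow]
  rfl

lemma fspline_eq_altSpline (hs : s ≠ 0) (hev : Even s) (hn : n ≠ 0) {x : ℝ}
    (hx : x ∈ Set.Icc (-1) 1) : fspline s n x = altSpline s n x := by
  obtain ⟨k, rfl⟩ := Nat.exists_eq_succ_of_ne_zero hn
  induction k generalizing x with
  | zero =>
    rw [fspline, ← integral_altSpline hx.1]
    refine intervalIntegral.integral_congr_ae ?_
    have hnull : MeasureTheory.volume (insert 1 (chebKnot s '' Set.Iio (2 * s))) = 0 :=
      (((Set.finite_Iio _).image _).insert _).measure_zero _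
    filter_upwards [MeasureTheory.compl_mem_ae_iff.2 hnull] with t ht hmem
    rw [Set.uIoc_of_le hx.1] at hmem
    simp only [Set.mem_compl_iff, Set.mem_insert_iff, Set.mem_image, Set.mem_Iio, not_or,
      not_exists, not_and] at ht
    exact fspline_zero_eq_altSpline hs hev ⟨hmem.1, (hmem.2.trans hx.2).lt_of_ne ht.1⟩ ht.2
  | succ k ih =>
    rw [fspline, ← integral_altSpline hx.1]
    refine intervalIntegral.integral_congr fun t ht => ?_
    rw [Set.uIcc_of_le hx.1] at ht
    exact ih ⟨ht.1, ht.2.trans hx.2⟩ k.succ_ne_zero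

lemma integral_truncPow_smul_iteratedDeriv [CompleteSpace E] {F : ℝ → E}
    (hF : ContDiff ℝ (n + 1 : ℕ) F) {a b ξ : ℝ} (hξ : ξ ∈ Set.Icc a b) :
    ∫ t in a..b, truncPow n ξ t • iteratedDeriv (n + 1) F t =
      (-1 : ℝ) ^ (n + 1) • (F ξ - ∑ k ∈ range (n + 1),
        ((k.factorial : ℝ)⁻¹ * (ξ - b) ^ k) • iteratedDeriv k F b) := by
  rw [integral_truncPow_smul n (hξ.1.trans hξ.2) hξ.1]
  rcases hξ.2.eq_or_lt with rfl | hlt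
  · simp [sum_range_succ']
  have huniq : UniqueDiffOn ℝ (Set.uIcc b ξ) := uniqueDiffOn_uIcc hlt.ne'
  have hderiv {k : ℕ} (hk : k ≤ n + 1) {t : ℝ} (ht : t ∈ Set.uIcc b ξ) :
      iteratedDerivWithin k F (Set.uIcc b ξ) t = iteratedDeriv k F t :=
    iteratedDerivWithin_eq_iteratedDeriv huniq (hF.contDiffAt.of_le (by exact_mod_cast hk)) ht
  have htaylor := taylor_integral_remainder (x := ξ) (x₀ := b) hF.contDiffOn
  rw [taylor_within_apply, sum_congr rfl fun k hk => by
    rw [hderiv (mem_range.1 hk).le Set.left_mem_uIcc]] at htaylor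
  rw [htaylor, intervalIntegral.integral_symm, ← intervalIntegral.integral_of_le hlt.le,
    ← intervalIntegral.integral_neg, ← intervalIntegral.integral_smul]
  refine intervalIntegral.integral_congr fun t ht => ?_
  have hsign : (t - ξ) ^ n = (-1 : ℝ) ^ (n + 1) * -(ξ - t) ^ n := by
    rw [← neg_sub ξ t, neg_pow]; ring
  rw [hderiv le_rfl (Set.uIcc_comm ξ b ▸ ht), hsign, ← neg_smul, smul_smul, ← neg_div,
    mul_div_assoc]

/-- Taylor's formula shows that `altSpline s n` is the Peano kernel of `altKnotSum s`, which
annihilates polynomials of degree `n < s`. -/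
theorem integral_altSpline_smul_iteratedDeriv [CompleteSpace E] {F : ℝ → E}
    (hF : ContDiff ℝ (n + 1 : ℕ) F) (hn : n < s) :
    ∫ t in (-1)..1, altSpline s n t • iteratedDeriv (n + 1) F t =
      (-1 : ℝ) ^ (n + 1) • altKnotSum s F := by
  set T : ℝ → E := fun ξ => ∑ k ∈ range (n + 1),
    ((k.factorial : ℝ)⁻¹ * (ξ - 1) ^ k) • iteratedDeriv k F 1 with hT
  have hT0 : altKnotSum s T = 0 := by
    rw [hT, altKnotSum_sum]
    refine sum_eq_zero fun k hk => ?_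
    simp_rw [altKnotSum_smul_const, ← smul_eq_mul, altKnotSum_const_smul]
    rw [altKnotSum_sub_pow_eq_zero (by have := mem_range.1 hk; omega), smul_zero, zero_smul]
  have hrem : Set.EqOn (fun ξ => ∫ t in (-1)..1, truncPow n ξ t • iteratedDeriv (n + 1) F t)
      (fun ξ => (-1 : ℝ) ^ (n + 1) • (F ξ - T ξ)) (Set.Icc (-1) 1) :=
    fun ξ hξ => integral_truncPow_smul_iteratedDeriv hF hξ
  calc ∫ t in (-1)..1, altSpline s n t • iteratedDeriv (n + 1) F t
      = altKnotSum s fun ξ => ∫ t in (-1)..1, truncPow n ξ t • iteratedDeriv (n + 1) F t := by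
        simp only [altSpline_eq_sum, sum_smul, altKnotSum, mul_smul]
        rw [intervalIntegral.integral_finsetSum]
        · simp only [intervalIntegral.integral_smul]
        · intro j _
          exact (intervalIntegrable_truncPow_smul n (chebKnot s j)
            (hF.continuous_iteratedDeriv' (n + 1)) (-1) 1).smul ((-1 : ℝ) ^ j)
    _ = (-1 : ℝ) ^ (n + 1) • altKnotSum s F := by
        rw [altKnotSum_congr hrem, altKnotSum_const_smul, altKnotSum_sub, hT0, sub_zero]

section Moments

variable {w q : ℝ} {l : ℕ}

lemma iteratedDeriv_of_hasDerivAt_succ {P : ℕ → ℝ → E}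
    (hP : ∀ r x, HasDerivAt (P (r + 1)) (P r x) x) (n r : ℕ) :
    iteratedDeriv n (P (n + r)) = P r := by
  induction n with
  | zero => simp
  | succ n ih =>
    rw [iteratedDeriv_succ', add_right_comm, ← ih]
    exact congrArg _ (funext fun x => (hP _ x).deriv)

/-- The antiderivatives of `x ^ l * exp (i w x)` of order `r`, obtained from those of
`exp (i w x)` by the Leibniz rule for `r`-fold integrals. -/
noncomputable def expPrimitive (w : ℝ) : ℕ → ℕ → ℝ → ℂ
  | 0, r, x => Complex.exp (w * x * Complex.I) / (w * Complex.I) ^ r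
  | l + 1, r, x => x * expPrimitive w l r x - r * expPrimitive w l (r + 1) x

lemma hasDerivAt_exp_mul_I (w x : ℝ) :
    HasDerivAt (fun y : ℝ => Complex.exp (w * y * Complex.I))
      (Complex.exp (w * x * Complex.I) * (w * Complex.I)) x := by
  have h := ((Complex.ofRealCLM.hasDerivAt (x := x)).const_mul (w : ℂ)).mul_const Complex.I
  simpa using h.cexp

lemma hasDerivAt_expPrimitive (hw : w ≠ 0) (l r : ℕ) (x : ℝ) :
    HasDerivAt (expPrimitive w l (r + 1)) (expPrimitive w l r x) x := by
  induction l generalizing r with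
  | zero =>
    have hw' : (w : ℂ) ≠ 0 := Complex.ofReal_ne_zero.2 hw
    refine ((hasDerivAt_exp_mul_I w x).div_const ((w * Complex.I) ^ (r + 1))).congr_deriv ?_
    simp only [expPrimitive]
    field_simp
    ring
  | succ l ih =>
    refine (((Complex.ofRealCLM.hasDerivAt (x := x)).mul (ih r)).sub
      ((ih (r + 1)).const_mul ((r + 1 : ℕ) : ℂ))).congr_deriv ?_
    simp only [expPrimitive, Complex.ofRealCLM_apply, Complex.ofReal_one]
    push_cast
    ring

lemma expPrimitive_zero_right (w : ℝ) (l : ℕ) (x : ℝ) :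
    expPrimitive w l 0 x = x ^ l * Complex.exp (w * x * Complex.I) := by
  induction l with
  | zero => simp [expPrimitive]
  | succ l ih => simp only [expPrimitive, ih]; push_cast; ring

lemma contDiff_expPrimitive (w : ℝ) (l r : ℕ) {k : WithTop ℕ∞} :
    ContDiff ℝ k (expPrimitive w l r) := by
  have hofReal : ContDiff ℝ k ((↑) : ℝ → ℂ) := Complex.ofRealCLM.contDiff
  induction l generalizing r with
  | zero =>
    exact ((contDiff_const.mul hofReal).mul contDiff_const).cexp.div_const _
  | succ l ih => exact (hofReal.mul (ih r)).sub (contDiff_const.mul (ih (r + 1)))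

lemma norm_exp_mul_I (w x : ℝ) : ‖Complex.exp (w * x * Complex.I)‖ = 1 := by
  rw [← Complex.ofReal_mul, Complex.norm_exp_ofReal_mul_I]

/-- The factor lost in the decay of the spline's Fourier transform at `w` when the spline is
multiplied by `x ^ l`, for `l ≤ 2` and frequencies `|w| ≥ s / q`. -/
noncomputable def momentFactor : ℕ → ℝ → ℝ
  | 0, _ => 1
  | 1, q => 1 + q
  | _ + 2, q => 1 + 2 * q + 7 / 6 * q ^ 2

lemma norm_expPrimitive_succ_le {B B' : ℝ} {r : ℕ} {x : ℝ} (hx : x ∈ Set.Icc (-1) 1)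
    (hB : ‖expPrimitive w l r x‖ ≤ B) (hB' : ‖expPrimitive w l (r + 1) x‖ ≤ B') :
    ‖expPrimitive w (l + 1) r x‖ ≤ B + r * B' := by
  rw [expPrimitive]
  refine (norm_sub_le _ _).trans (add_le_add ?_ ?_)
  · rw [norm_mul, Complex.norm_real]
    exact (mul_le_of_le_one_left (norm_nonneg _) (abs_le.2 hx)).trans hB
  · rw [norm_mul, Complex.norm_natCast]
    gcongr

lemma norm_expPrimitive_le (hl : l ≤ 2) (hs : 6 ≤ s) (hq : 0 ≤ q) (hw : w ≠ 0)
    (hsw : s ≤ q * |w|) {x : ℝ} (hx : x ∈ Set.Icc (-1) 1) :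
    ‖expPrimitive w l s x‖ ≤ momentFactor l q / |w| ^ s := by
  have hw' : 0 < |w| := abs_pos.2 hw
  have hs' : (6 : ℝ) ≤ s := by exact_mod_cast hs
  have h0 (r : ℕ) : ‖expPrimitive w 0 r x‖ ≤ 1 / |w| ^ r := by
    simp [expPrimitive, norm_exp_mul_I]
  have h1 (r : ℕ) := norm_expPrimitive_succ_le hx (h0 r) (h0 (r + 1))
  have h2 := norm_expPrimitive_succ_le hx (h1 s) (h1 (s + 1))
  have hq1 : s / |w| ≤ q := (div_le_iff₀ hw').2 hsw
  interval_cases l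
  · exact h0 s
  · refine (h1 s).trans ?_
    calc 1 / |w| ^ s + s * (1 / |w| ^ (s + 1)) = (1 + s / |w|) / |w| ^ s := by
          field_simp; ring
      _ ≤ _ := by rw [momentFactor]; gcongr
  · refine h2.trans ?_
    have hq2 : s * (s + 1) / |w| ^ 2 ≤ 7 / 6 * q ^ 2 := by
      rw [div_le_iff₀ (by positivity)]
      nlinarith [mul_le_mul hsw hsw (by positivity) (by positivity)]
    calc _ = (1 + 2 * (s / |w|) + s * (s + 1) / |w| ^ 2) / |w| ^ s := by
          push_cast; field_simp; ring
      _ ≤ _ := by rw [momentFactor]; gcongr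

/-- The Fourier integral of a function supported in `[-1, 1]`. -/
noncomputable def expIntegral (H : ℝ → ℂ) (w : ℝ) : ℂ :=
  ∫ y in (-1)..1, Complex.exp (w * y * Complex.I) * H y

/-- The perfect B-spline weighted by `x ^ l`, on the interval `[-1, 1]`. -/
noncomputable def weightedSpline (s l : ℕ) (x : ℝ) : ℂ := x ^ l * altSpline s (s - 1) x

theorem norm_expIntegral_weightedSpline_le (hl : l ≤ 2) (hs : 6 ≤ s) (hq : 0 ≤ q) (hw : w ≠ 0)
    (hsw : s ≤ q * |w|) :
    ‖expIntegral (weightedSpline s l) w‖ ≤ 2 * s * momentFactor l q / |w| ^ s := by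
  obtain ⟨n, rfl⟩ := Nat.exists_eq_succ_of_ne_zero (show s ≠ 0 by omega)
  have hderiv : iteratedDeriv (n + 1) (expPrimitive w l (n + 1)) = expPrimitive w l 0 :=
    iteratedDeriv_of_hasDerivAt_succ (hasDerivAt_expPrimitive hw l) (n + 1) 0
  have hpeano := integral_altSpline_smul_iteratedDeriv (contDiff_expPrimitive w l (n + 1))
    n.lt_succ_self
  have hnorm : ‖expIntegral (weightedSpline (n + 1) l) w‖ =
      ‖altKnotSum (n + 1) (expPrimitive w l (n + 1))‖ := by
    calc _ = ‖(-1 : ℝ) ^ (n + 1) • altKnotSum (n + 1) (expPrimitive w l (n + 1))‖ := by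
          rw [← hpeano, hderiv]
          refine congrArg norm (intervalIntegral.integral_congr fun y _ => ?_)
          simp only [expPrimitive_zero_right, weightedSpline, Complex.real_smul,
            add_tsub_cancel_right]
          ring
      _ = _ := by simp
  rw [hnorm, mul_div_assoc]
  exact norm_altKnotSum_le fun x hx => norm_expPrimitive_le hl hs hq hw hsw hx

theorem integral_pow_two_mul_altSpline {r : ℕ} (hr : r < s) (hev : Even s) :
    ∫ x in (-1)..1, x ^ (2 * r) * altSpline s (s - 1) x =
      4 * s * (2 * r).factorial / (r.factorial * (s + r).factorial * 2 ^ (s + 2 * r)) := by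
  obtain ⟨n, rfl⟩ := Nat.exists_eq_add_of_lt (Nat.zero_lt_of_lt hr)
  rw [zero_add] at hr hev ⊢
  set d := (n + 1 + 2 * r).descFactorial (n + 1)
  have hd : (d : ℝ) ≠ 0 := by exact_mod_cast (Nat.descFactorial_pos.2 (by omega)).ne'
  have hpeano : d * ∫ x in (-1)..1, x ^ (2 * r) * altSpline (n + 1) n x =
      4 * (n + 1 : ℕ) * (n + 1 + 2 * r).choose r / 2 ^ (n + 1 + 2 * r) := by
    have h := integral_altSpline_smul_iteratedDeriv (F := fun x : ℝ => x ^ (n + 1 + 2 * r))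
      (by fun_prop) n.lt_succ_self
    rw [altKnotSum_pow_add_two_mul hr, hev.neg_one_pow, one_smul] at h
    simp only [iteratedDeriv_pow, add_tsub_cancel_left, smul_eq_mul] at h
    rw [← h, ← intervalIntegral.integral_const_mul]
    congr 1 with x
    ring
  have hchoose : ((n + 1 + 2 * r).choose r * r.factorial * (n + 1 + r).factorial : ℝ) =
      (2 * r).factorial * d := by
    have h := Nat.choose_mul_factorial_mul_factorial (show r ≤ n + 1 + 2 * r by omega)
    rw [show n + 1 + 2 * r - r = n + 1 + r by omega,
      ← Nat.factorial_mul_descFactorial (show n + 1 ≤ n + 1 + 2 * r by omega),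
      add_tsub_cancel_left] at h
    exact_mod_cast h
  rw [add_tsub_cancel_right, eq_div_iff (by positivity)]
  apply mul_left_cancel₀ hd
  rw [eq_div_iff (by positivity)] at hpeano
  linear_combination r.factorial * (n + 1 + r).factorial * hpeano + 4 * (n + 1 : ℕ) * hchoose

end Moments

end PerfectSpline

section Poisson

open scoped FourierTransform
open Finset

variable {E : Type*} [NormedAddCommGroup E] {H : ℝ → ℂ} {D t : ℝ} {s : ℕ}

/-- The trigonometric sum whose coefficients are the samples of `H` at the multiples of
`1 / (N + 1)` inside `(-1, 1)`. -/
noncomputable def sampledSum (H : ℝ → ℂ) (N : ℕ) (t : ℝ) : ℂ :=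
  ∑ k ∈ Icc (-(N : ℤ)) N, H (k / (N + 1)) * Complex.exp (k * t * Complex.I)

lemma expIntegral_eq_integral (hH : ∀ x, 1 ≤ |x| → H x = 0) (w : ℝ) :
    expIntegral H w = ∫ y : ℝ, Complex.exp (w * y * Complex.I) * H y := by
  refine intervalIntegral.integral_eq_integral_of_support_subset fun x hx => ?_
  have hx1 : |x| < 1 := not_le.1 fun h => hx (by simp [hH x h])
  exact ⟨(abs_lt.1 hx1).1, (abs_lt.1 hx1).2.le⟩

lemma fourier_comp_div_mul_exp (hH : ∀ x, 1 ≤ |x| → H x = 0) {c : ℝ} (hc : 0 < c) (t ξ : ℝ) :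
    𝓕 (fun x : ℝ => H (x / c) * Complex.exp (x * t * Complex.I)) ξ =
      c * expIntegral H (c * (t - 2 * π * ξ)) := by
  have hc' : (c : ℂ) ≠ 0 := Complex.ofReal_ne_zero.2 hc.ne'
  rw [expIntegral_eq_integral hH, ← Complex.real_smul,
    ← abs_of_pos hc, ← MeasureTheory.Measure.integral_comp_div, abs_of_pos hc,
    Real.fourier_real_eq_integral_exp_smul]
  congr 1 with x
  rw [smul_eq_mul, mul_comm (H _), ← mul_assoc, ← Complex.exp_add]
  congr 2
  push_cast
  field_simp
  ring

theorem sampledSum_eq_tsum_expIntegral (hcont : Continuous H) (hH : ∀ x, 1 ≤ |x| → H x = 0)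
    (N : ℕ) (t : ℝ)
    (hsum : Summable fun n : ℤ => expIntegral H ((N + 1) * (t - 2 * π * n))) :
    sampledSum H N t = (N + 1) * ∑' n : ℤ, expIntegral H ((N + 1) * (t - 2 * π * n)) := by
  have hN : (0 : ℝ) < N + 1 := by positivity
  set f : ℝ → ℂ := fun x => H (x / (N + 1 : ℝ)) * Complex.exp (x * t * Complex.I) with hf
  have hf_zero {x : ℝ} (hx : (N : ℝ) + 1 ≤ |x|) : f x = 0 := by
    rw [hf]
    beta_reduce
    rw [hH, zero_mul]
    rwa [abs_div, abs_of_pos hN, one_le_div hN]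
  have hfourier (n : ℤ) : 𝓕 f n = (N + 1) * expIntegral H ((N + 1) * (t - 2 * π * n)) := by
    rw [fourier_comp_div_mul_exp hH hN]
    push_cast
    rfl
  have hdecay : f =O[Filter.cocompact ℝ] fun x => |x| ^ (-2 : ℝ) := by
    refine Filter.EventuallyEq.trans_isBigO ?_ (Asymptotics.isBigO_zero _ _)
    filter_upwards [tendsto_norm_cocompact_atTop.eventually_ge_atTop ((N : ℝ) + 1)] with x hx
    exact hf_zero hx
  have hf_cont : Continuous f := (hcont.comp (by fun_prop)).mul (by fun_prop)
  have hpoisson := Real.tsum_eq_tsum_fourier_of_rpow_decay_of_summable hf_cont one_lt_two hdecay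
    (by simp_rw [hfourier]; exact hsum.mul_left _) 0
  simp only [zero_add, QuotientAddGroup.mk_zero, fourier_eval_zero, mul_one, hfourier,
    tsum_mul_left] at hpoisson
  rw [← hpoisson, tsum_eq_sum (s := Icc (-(N : ℤ)) N) fun k hk => hf_zero ?_]
  · simp [sampledSum, hf]
  · rw [mem_Icc, ← abs_le, not_le] at hk
    exact_mod_cast Int.add_one_le_iff.2 hk

lemma summable_one_div_add_two_pow (hs : 2 ≤ s) :
    Summable fun k : ℕ => (1 : ℝ) / (k + 2) ^ s := by
  have h := (summable_nat_add_iff 2).2 (Real.summable_one_div_nat_pow.2 (show 1 < s by omega))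
  exact h.congr fun k => by push_cast; rfl

lemma tsum_one_div_add_two_pow_le (hs : 6 ≤ s) :
    ∑' k : ℕ, (1 : ℝ) / (k + 2) ^ s ≤ 0.021 := by
  have hzeta := ((hasSum_nat_add_iff' 2).2 hasSum_zeta_four).mul_left (1 / 4)
  have hle (k : ℕ) : (1 : ℝ) / (k + 2) ^ s ≤ 1 / 4 * (1 / ((k + 2 : ℕ) : ℝ) ^ 4) := by
    rw [one_div_mul_one_div]
    push_cast
    refine one_div_le_one_div_of_le (by positivity) ?_
    calc 4 * ((k : ℝ) + 2) ^ 4 ≤ ((k : ℝ) + 2) ^ 2 * (k + 2) ^ 4 := by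
          gcongr
          nlinarith [(Nat.cast_nonneg k : (0 : ℝ) ≤ k)]
      _ = ((k : ℝ) + 2) ^ 6 := by ring
      _ ≤ ((k : ℝ) + 2) ^ s := by
          gcongr
          linarith [(Nat.cast_nonneg k : (0 : ℝ) ≤ k)]
  have hpi : π ^ 4 ≤ 97.42 := by
    calc π ^ 4 ≤ 3.1416 ^ 4 := by gcongr; exact Real.pi_lt_d4.le
      _ ≤ _ := by norm_num
  calc ∑' k : ℕ, (1 : ℝ) / (k + 2) ^ s
      ≤ 1 / 4 * (π ^ 4 / 90 - ∑ i ∈ range 2, 1 / (i : ℝ) ^ 4) := by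
        rw [← hzeta.tsum_eq]
        exact (summable_one_div_add_two_pow (by omega)).tsum_le_tsum hle hzeta.summable
    _ ≤ 0.021 := by
        simp only [sum_range_succ, sum_range_zero]
        norm_num
        linarith

/-- The enumeration `0, 1, -1, 2, -2, …` of the integers. It lists the translates `t - 2πn` of
`t ∈ [0, π]` by increasing distance to the origin. -/
def imageIndex : ℕ ≃ ℤ := Equiv.intEquivNat.symm.trans (Equiv.neg ℤ)

lemma imageIndex_two_mul (m : ℕ) : imageIndex (2 * m) = -m := by
  rw [imageIndex, Equiv.trans_apply,
    (Equiv.symm_apply_eq _).2 (show 2 * m = Equiv.intEquivNat m from rfl)]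
  rfl

lemma imageIndex_two_mul_add_one (m : ℕ) : imageIndex (2 * m + 1) = m + 1 := by
  rw [imageIndex, Equiv.trans_apply,
    (Equiv.symm_apply_eq _).2 (show 2 * m + 1 = Equiv.intEquivNat (Int.negSucc m) from rfl)]
  rfl

lemma mul_pi_le_abs_sub_imageIndex (ht : t ∈ Set.Icc 0 π) (k : ℕ) :
    k * π ≤ |t - 2 * π * imageIndex k| := by
  obtain ⟨m, rfl | rfl⟩ := Nat.even_or_odd' k
  · rw [imageIndex_two_mul]
    refine le_trans ?_ (le_abs_self _)
    push_cast
    linarith [ht.1]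
  · rw [imageIndex_two_mul_add_one, abs_sub_comm]
    refine le_trans ?_ (le_abs_self _)
    push_cast
    linarith [ht.2]

/-- A bound for `∑ 1 / |t - 2πn| ^ s` over `n ≠ 0`, where `t ∈ [0, π]` and `s ≥ 6`. The term
`n = 1` is kept exact since it dominates for `t` close to `π`. -/
noncomputable def imageTail (s : ℕ) (t : ℝ) : ℝ := 1 / (2 * π - t) ^ s + 0.021 / π ^ s

lemma summable_and_norm_tsum_sub_le_imageTail [CompleteSpace E] (hs : 6 ≤ s)
    (ht : t ∈ Set.Icc 0 π) (hD : 0 ≤ D) {a : ℤ → E}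
    (ha : ∀ n ≠ 0, ‖a n‖ ≤ D / |t - 2 * π * n| ^ s) :
    Summable a ∧ ‖∑' n, a n - a 0‖ ≤ D * imageTail s t := by
  have hindex0 : imageIndex 0 = 0 := imageIndex_two_mul 0
  have hindex1 : imageIndex 1 = 1 := imageIndex_two_mul_add_one 0
  have htail (k : ℕ) :
      ‖a (imageIndex (k + 2))‖ ≤ D / π ^ s * (1 / ((k : ℝ) + 2) ^ s) := by
    have hne : imageIndex (k + 2) ≠ 0 := by
      rw [← hindex0]
      exact imageIndex.injective.ne (by omega)
    refine (ha _ hne).trans ?_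
    rw [div_mul_div_comm, mul_one, ← mul_pow, mul_comm π]
    have hk := mul_pi_le_abs_sub_imageIndex ht (k + 2)
    push_cast at hk
    gcongr
  have hsum2 := (summable_one_div_add_two_pow (show 2 ≤ s by omega)).mul_left (D / π ^ s)
  have hsum : Summable (a ∘ imageIndex) :=
    (summable_nat_add_iff 2).1 (Summable.of_norm_bounded hsum2 htail)
  refine ⟨imageIndex.summable_iff.1 hsum, ?_⟩
  have hrest : ‖∑' k, a (imageIndex (k + 2))‖ ≤ D * (0.021 / π ^ s) := by
    refine (tsum_of_norm_bounded hsum2.hasSum htail).trans ?_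
    rw [tsum_mul_left, div_mul_eq_mul_div, mul_div_assoc]
    have := tsum_one_div_add_two_pow_le hs
    gcongr
  have hone : ‖a 1‖ ≤ D * (1 / (2 * π - t) ^ s) := by
    have h2π : |t - 2 * π * (1 : ℤ)| = 2 * π - t := by
      rw [abs_sub_comm, Int.cast_one, mul_one, abs_of_pos]
      linarith [ht.2, Real.pi_pos]
    simpa only [h2π, mul_one_div] using ha 1 one_ne_zero
  calc ‖∑' n, a n - a 0‖ = ‖a 1 + ∑' k, a (imageIndex (k + 2))‖ := by
        have hsplit := hsum.sum_add_tsum_nat_add 2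
        simp only [sum_range_succ, sum_range_zero, zero_add, Function.comp_apply, hindex0,
          hindex1] at hsplit
        rw [← imageIndex.tsum_eq, ← hsplit, add_assoc, add_sub_cancel_left]
    _ ≤ _ := (norm_add_le _ _).trans (add_le_add hone hrest)
    _ = _ := by rw [imageTail, mul_add]

theorem norm_sampledSum_sub_expIntegral_le (hcont : Continuous H) (hH : ∀ x, 1 ≤ |x| → H x = 0)
    (hs : 6 ≤ s) (N : ℕ) (ht : t ∈ Set.Icc 0 π) (hD : 0 ≤ D)
    (hdecay : ∀ w : ℝ, (N + 1) * π ≤ |w| → ‖expIntegral H w‖ ≤ D / |w| ^ s) :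
    ‖sampledSum H N t - (N + 1) * expIntegral H ((N + 1) * t)‖ ≤
      (N + 1) * (D / (N + 1) ^ s * imageTail s t) := by
  have hN : (0 : ℝ) < N + 1 := by positivity
  have himage (n : ℤ) (hn : n ≠ 0) : ‖expIntegral H ((N + 1) * (t - 2 * π * n))‖ ≤
      D / (N + 1) ^ s / |t - 2 * π * n| ^ s := by
    obtain ⟨k, rfl⟩ := imageIndex.surjective n
    have hk : 1 ≤ (k : ℝ) := by
      exact_mod_cast Nat.one_le_iff_ne_zero.2 fun h => hn <| by rw [h]; exact imageIndex_two_mul 0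
    have hw : (N + 1) * π ≤ |(N + 1) * (t - 2 * π * imageIndex k)| := by
      rw [abs_mul, abs_of_pos hN]
      gcongr
      exact (le_mul_of_one_le_left Real.pi_pos.le hk).trans (mul_pi_le_abs_sub_imageIndex ht k)
    refine (hdecay _ hw).trans_eq ?_
    rw [abs_mul, abs_of_pos hN, mul_pow, div_div]
  obtain ⟨hsum, hle⟩ :=
    summable_and_norm_tsum_sub_le_imageTail hs ht (by positivity : 0 ≤ D / (N + 1) ^ s) himage
  have hnorm : ‖(N : ℂ) + 1‖ = N + 1 := by
    rw [← Nat.cast_succ, Complex.norm_natCast, Nat.cast_succ]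
  rw [sampledSum_eq_tsum_expIntegral hcont hH N t hsum, ← mul_sub, norm_mul, hnorm]
  simp only [Int.cast_zero, mul_zero, sub_zero] at hle
  gcongr

lemma pow_mul_imageTail_le (s : ℕ) (ht : t ∈ Set.Icc 0 π) : t ^ s * imageTail s t ≤ 1.021 := by
  have hpi := Real.pi_pos
  have h1 : (t / (2 * π - t)) ^ s ≤ 1 :=
    pow_le_one₀ (div_nonneg ht.1 (by linarith [ht.2]))
      ((div_le_one (by linarith [ht.2])).2 (by linarith [ht.2]))
  have h2 : (t / π) ^ s ≤ 1 := pow_le_one₀ (div_nonneg ht.1 hpi.le) ((div_le_one hpi).2 ht.2)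
  rw [imageTail, mul_add, mul_one_div, ← div_pow, mul_div_left_comm, ← div_pow]
  linarith

lemma imageTail_zero_le (hs : 6 ≤ s) : imageTail s 0 ≤ 0.037 / π ^ s := by
  have h : (2 : ℝ) ^ 6 ≤ 2 ^ s := pow_le_pow_right₀ one_le_two hs
  calc imageTail s 0 = (1 / 2 ^ s + 0.021) / π ^ s := by
        rw [imageTail, sub_zero, mul_pow]
        field_simp
    _ ≤ (1 / 2 ^ 6 + 0.021) / π ^ s := by gcongr
    _ ≤ _ := by gcongr; norm_num

end Poisson

section Discretisation

open Finset

variable {s N l : ℕ} {t : ℝ}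

/-- The integral of the perfect B-spline. -/
noncomputable def splineMass (s : ℕ) : ℝ := 4 / (2 ^ s * (s - 1).factorial)

lemma splineMass_pos (s : ℕ) : 0 < splineMass s := by unfold splineMass; positivity

lemma splineMass_mul_factorial (s : ℕ) : splineMass s * ((s - 1).factorial * 2 ^ s) = 4 := by
  rw [splineMass]
  field_simp

lemma expIntegral_weightedSpline_zero (s l : ℕ) :
    expIntegral (weightedSpline s l) 0 = (∫ x in (-1)..1, x ^ l * altSpline s (s - 1) x : ℝ) := by
  simp [expIntegral, weightedSpline, ← intervalIntegral.integral_ofReal]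

lemma expIntegral_weightedSpline_zero_zero (hs : s ≠ 0) (hev : Even s) :
    expIntegral (weightedSpline s 0) 0 = splineMass s := by
  have h := integral_pow_two_mul_altSpline (Nat.pos_of_ne_zero hs) hev
  rw [mul_zero, add_zero] at h
  rw [expIntegral_weightedSpline_zero, h, ← Nat.mul_factorial_pred hs, splineMass]
  congr 1
  have : (s : ℝ) ≠ 0 := by exact_mod_cast hs
  push_cast [Nat.factorial_zero]
  field_simp

lemma expIntegral_weightedSpline_two_zero (hs : 2 ≤ s) (hev : Even s) :
    expIntegral (weightedSpline s 2) 0 = splineMass s / (2 * (s + 1)) := by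
  have h := integral_pow_two_mul_altSpline (show 1 < s by omega) hev
  rw [mul_one] at h
  rw [expIntegral_weightedSpline_zero, h, Nat.factorial_succ s,
    ← Nat.mul_factorial_pred (show s ≠ 0 by omega), splineMass]
  have : (s : ℂ) ≠ 0 := by exact_mod_cast show s ≠ 0 by omega
  have : (s : ℂ) + 1 ≠ 0 := by exact_mod_cast s.succ_ne_zero
  push_cast [Nat.factorial_one, Nat.factorial_two]
  field_simp
  ring

lemma factorial_mul_two_pow_div_le (hs : 6 ≤ s) (hN : 2 * s ≤ N) :
    s.factorial * 2 ^ s / ((N + 1) * π) ^ s ≤ (7 / 900 / (s + 1) : ℝ) := by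
  have hfact : (s.factorial * 2 ^ s : ℝ) ≤ (N + 1) ^ s := by
    calc (s.factorial * 2 ^ s : ℝ) ≤ s ^ s * 2 ^ s := by
          gcongr
          exact_mod_cast s.factorial_le_pow
      _ = (2 * s) ^ s := by rw [← mul_pow, mul_comm]
      _ ≤ _ := by
          gcongr
          exact_mod_cast hN.trans N.le_succ
  have hpi : ((s : ℝ) + 1) * 900 ≤ 7 * π ^ s := by
    have hbernoulli := one_add_mul_le_pow (show (-2 : ℝ) ≤ 2 by norm_num) (s - 6)
    rw [Nat.cast_sub hs] at hbernoulli
    calc ((s : ℝ) + 1) * 900 ≤ 7 * (1 + 2) ^ (s - 6) * 3.14 ^ 6 := by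
          have hs' : (6 : ℝ) ≤ s := by exact_mod_cast hs
          push_cast at hbernoulli
          norm_num at hbernoulli ⊢
          nlinarith
      _ ≤ 7 * π ^ (s - 6) * π ^ 6 := by
          gcongr
          · linarith [Real.pi_gt_three]
          · exact Real.pi_gt_d2.le
      _ = _ := by rw [mul_assoc, ← pow_add, Nat.sub_add_cancel hs]
  rw [mul_pow, div_div, div_le_div_iff₀ (by positivity) (by positivity)]
  calc (s.factorial * 2 ^ s : ℝ) * (900 * (s + 1)) ≤ (N + 1) ^ s * ((s + 1) * 900) := by
        rw [mul_comm 900]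
        gcongr
    _ ≤ (N + 1) ^ s * (7 * π ^ s) := by gcongr
    _ = _ := by ring

lemma continuous_weightedSpline (hs : 2 ≤ s) (l : ℕ) : Continuous (weightedSpline s l) :=
  (Complex.continuous_ofReal.pow l).mul
    (Complex.continuous_ofReal.comp (continuous_altSpline (by omega)))

lemma weightedSpline_of_one_le_abs (hs : 2 ≤ s) (l : ℕ) {x : ℝ} (hx : 1 ≤ |x|) :
    weightedSpline s l x = 0 := by
  have h : altSpline s (s - 1) x = 0 := by
    rcases le_abs'.1 hx with hx | hx
    · exact altSpline_of_le_neg_one hx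
    · exact altSpline_of_one_le (by omega) (by omega) hx
  rw [weightedSpline, h, Complex.ofReal_zero, mul_zero]

lemma momentFactor_nonneg {q : ℝ} (hq : 0 ≤ q) (l : ℕ) : 0 ≤ momentFactor l q := by
  unfold momentFactor
  split <;> positivity

lemma norm_sampledSum_weightedSpline_sub_le (hl : l ≤ 2) (hs : 6 ≤ s) (hN : 2 * s ≤ N)
    (ht : t ∈ Set.Icc 0 π) :
    ‖sampledSum (weightedSpline s l) N t -
        (N + 1) * expIntegral (weightedSpline s l) ((N + 1) * t)‖ ≤
      (N + 1) * (2 * s * momentFactor l (1 / 6) / (N + 1) ^ s * imageTail s t) := by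
  have hfactor := momentFactor_nonneg (show (0 : ℝ) ≤ 1 / 6 by norm_num) l
  refine norm_sampledSum_sub_expIntegral_le (continuous_weightedSpline (by omega) l)
    (fun x hx => weightedSpline_of_one_le_abs (by omega) l hx) hs N ht (by positivity) ?_
  intro w hw
  have hw0 : w ≠ 0 := abs_pos.1 (hw.trans_lt' (by positivity))
  have hsw : (s : ℝ) ≤ 1 / 6 * |w| := by
    have hN' : (2 * s : ℝ) ≤ N + 1 := by exact_mod_cast hN.trans N.le_succ
    nlinarith [Real.pi_gt_three]
  exact norm_expIntegral_weightedSpline_le hl hs (by norm_num) hw0 hsw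

lemma norm_sampledSum_weightedSpline_zero_sub_le (hl : l ≤ 2) (hs : 6 ≤ s) (hN : 2 * s ≤ N) :
    ‖sampledSum (weightedSpline s l) N 0 - (N + 1) * expIntegral (weightedSpline s l) 0‖ ≤
      (N + 1) * (splineMass s * (0.0002 / (s + 1))) := by
  have h := norm_sampledSum_weightedSpline_sub_le hl hs hN ⟨le_rfl, Real.pi_pos.le⟩
  rw [mul_zero] at h
  have hfactor : momentFactor l (1 / 6) ≤ 1.37 := by
    interval_cases l <;> norm_num [momentFactor]
  have hmass : 2 * (s : ℝ) = splineMass s * (s.factorial * 2 ^ s) / 2 := by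
    rw [← Nat.mul_factorial_pred (show s ≠ 0 by omega)]
    push_cast
    linear_combination (-s / 2 : ℝ) * splineMass_mul_factorial s
  have hmass_pos := splineMass_pos s
  refine h.trans (mul_le_mul_of_nonneg_left ?_ (by positivity))
  calc 2 * s * momentFactor l (1 / 6) / (N + 1) ^ s * imageTail s 0
      ≤ 2 * s * 1.37 / (N + 1) ^ s * (0.037 / π ^ s) := by
        gcongr
        · rw [imageTail, sub_zero]
          positivity
        · exact imageTail_zero_le hs
    _ = splineMass s * (1.37 * 0.037 / 2 * (s.factorial * 2 ^ s / ((N + 1) * π) ^ s)) := by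
        rw [hmass, mul_pow]
        ring
    _ ≤ splineMass s * (1.37 * 0.037 / 2 * (7 / 900 / (s + 1))) := by
        have := factorial_mul_two_pow_div_le hs hN
        gcongr splineMass s * (1.37 * 0.037 / 2 * ?_)
    _ ≤ _ := by
        gcongr
        rw [← mul_div_assoc]
        gcongr
        norm_num

lemma gtilde_eq_altSpline (hs : 2 ≤ s) (hev : Even s) {k : ℤ} (hk : k ∈ Icc (-(N : ℤ)) N) :
    gtilde s (k / (2 * (N + 1))) = altSpline s (s - 1) (k / (N + 1)) := by
  have hN : (0 : ℝ) < N + 1 := by positivity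
  rw [mem_Icc] at hk
  have h1 : (-(N : ℝ)) ≤ k := by exact_mod_cast hk.1
  have h2 : (k : ℝ) ≤ N := by exact_mod_cast hk.2
  rw [gtilde, show 2 * ((k : ℝ) / (2 * ((N : ℝ) + 1))) = k / (N + 1) by field_simp]
  refine fspline_eq_altSpline (by omega) hev (by omega) ⟨?_, ?_⟩
  · rw [le_div_iff₀ hN]; linarith
  · rw [div_le_iff₀ hN]; linarith

lemma ofReal_gnorm (hs : 2 ≤ s) (hev : Even s) :
    (gnorm s N : ℂ) = sampledSum (weightedSpline s 0) N 0 := by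
  rw [gnorm, sum_congr rfl fun k hk => gtilde_eq_altSpline hs hev hk]
  simp [sampledSum, weightedSpline]

lemma abs_gnorm_sub_le (hs : 6 ≤ s) (hev : Even s) (hN : 2 * s ≤ N) :
    |gnorm s N - (N + 1) * splineMass s| ≤ 0.0001 * ((N + 1) * splineMass s) := by
  have h := norm_sampledSum_weightedSpline_zero_sub_le (show 0 ≤ 2 by norm_num) hs hN
  rw [← ofReal_gnorm (by omega) hev, expIntegral_weightedSpline_zero_zero (by omega) hev] at h
  have hs1 : 0.0002 / ((s : ℝ) + 1) ≤ 0.0001 := by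
    rw [div_le_iff₀ (by positivity)]
    have : (6 : ℝ) ≤ s := by exact_mod_cast hs
    linarith
  have hmass_pos := splineMass_pos s
  calc |gnorm s N - (N + 1) * splineMass s|
      = ‖((gnorm s N : ℂ) - (N + 1) * splineMass s)‖ := by
        rw [← Real.norm_eq_abs, ← Complex.norm_real]
        push_cast
        rfl
    _ ≤ _ := h
    _ ≤ (N + 1) * (splineMass s * 0.0001) := by gcongr
    _ = _ := by ring

lemma gnorm_pos (hs : 6 ≤ s) (hev : Even s) (hN : 2 * s ≤ N) : 0 < gnorm s N := by
  have hmass : 0 < (N + 1) * splineMass s := mul_pos (by positivity) (splineMass_pos s)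
  linarith [(abs_le.1 (abs_gnorm_sub_le hs hev hN)).1]

theorem re_sampledSum_two_div_gnorm_ge (hs : 6 ≤ s) (hev : Even s) (hN : 2 * s ≤ N) :
    0.999 / (2 * ((s : ℝ) + 1)) ≤ (sampledSum (weightedSpline s 2) N 0).re / gnorm s N := by
  have h := (Complex.abs_re_le_norm _).trans
    (norm_sampledSum_weightedSpline_zero_sub_le le_rfl hs hN)
  rw [expIntegral_weightedSpline_two_zero (by omega) hev,
    show ((N : ℂ) + 1) * (splineMass s / (2 * (s + 1))) =
      ((N + 1) * (splineMass s / (2 * (s + 1))) : ℝ) by push_cast; rfl,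
    Complex.sub_re, Complex.ofReal_re] at h
  have hmass : 0 < (N + 1) * splineMass s := mul_pos (by positivity) (splineMass_pos s)
  have hg := (abs_le.1 (abs_gnorm_sub_le hs hev hN)).2
  rw [le_div_iff₀ (gnorm_pos hs hev hN)]
  calc 0.999 / (2 * ((s : ℝ) + 1)) * gnorm s N
      ≤ 0.999 / (2 * ((s : ℝ) + 1)) * (1.0001 * ((N + 1) * splineMass s)) := by
        gcongr
        linarith
    _ = 0.999 * 1.0001 * ((N + 1) * splineMass s / (2 * (s + 1))) := by ring
    _ ≤ (1 - 0.0004) * ((N + 1) * splineMass s / (2 * (s + 1))) := by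
        gcongr
        norm_num
    _ = (N + 1) * (splineMass s / (2 * (s + 1))) -
        (N + 1) * (splineMass s * (0.0002 / (s + 1))) := by
        field_simp
        ring
    _ ≤ _ := by linarith [(abs_le.1 h).1]

/-- The decay profile common to the kernel and its derivatives. -/
noncomputable def decay (s N : ℕ) (t : ℝ) : ℝ :=
  1.02 * (s - 1).factorial * 2 ^ s / ((N + 1) * t) ^ s

lemma decay_nonneg (hev : Even s) (N : ℕ) (t : ℝ) : 0 ≤ decay s N t := by
  have := hev.pow_nonneg (((N : ℝ) + 1) * t)
  unfold decay
  positivity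

lemma norm_sampledSum_weightedSpline_le (hl : l ≤ 2) (hs : 6 ≤ s) (hN : 2 * s ≤ N) (hπ : t ≤ π)
    (hst : 2 * s / 3 ≤ (N + 1) * t) :
    ‖sampledSum (weightedSpline s l) N t‖ ≤ (N + 1) * (2 / ((N + 1) * t) ^ s) *
      (s * (momentFactor l (3 / 2) + momentFactor l (1 / 6) * 1.021)) := by
  have hs' : (6 : ℝ) ≤ s := by exact_mod_cast hs
  have hw : 0 < (N + 1) * t := by linarith
  have ht : 0 < t := pos_of_mul_pos_right hw (by positivity)
  have hnear : ‖((N : ℂ) + 1) * expIntegral (weightedSpline s l) ((N + 1) * t)‖ ≤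
      (N + 1) * (2 * s * momentFactor l (3 / 2) / ((N + 1) * t) ^ s) := by
    have h := norm_expIntegral_weightedSpline_le (q := 3 / 2) hl hs (by norm_num) hw.ne'
      (by rw [abs_of_pos hw]; linarith)
    rw [abs_of_pos hw] at h
    rw [norm_mul, ← Nat.cast_succ, Complex.norm_natCast, Nat.cast_succ]
    gcongr
  have hfar := norm_sampledSum_weightedSpline_sub_le hl hs hN ⟨ht.le, hπ⟩
  have hfactor := momentFactor_nonneg (show (0 : ℝ) ≤ 1 / 6 by norm_num) l
  calc ‖sampledSum (weightedSpline s l) N t‖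
      ≤ (N + 1) * (2 * s * momentFactor l (1 / 6) / (N + 1) ^ s * imageTail s t) +
        (N + 1) * (2 * s * momentFactor l (3 / 2) / ((N + 1) * t) ^ s) :=
        (norm_le_norm_sub_add _ _).trans (add_le_add hfar hnear)
    _ = (N + 1) * (2 / ((N + 1) * t) ^ s) * (s * (momentFactor l (3 / 2) +
          momentFactor l (1 / 6) * (t ^ s * imageTail s t))) := by
        rw [mul_pow]
        field_simp
        ring
    _ ≤ _ := by
        gcongr
        exact pow_mul_imageTail_le s ⟨ht.le, hπ⟩

theorem norm_sampledSum_div_gnorm_le (hl : l ≤ 2) (hs : 6 ≤ s) (hev : Even s) (hN : 2 * s ≤ N)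
    (hπ : t ≤ π) (hst : 2 * s / 3 ≤ (N + 1) * t) :
    ‖sampledSum (weightedSpline s l) N t‖ / gnorm s N ≤ 2 ^ l * (s + 1 / 4) * decay s N t := by
  have hs' : (6 : ℝ) ≤ s := by exact_mod_cast hs
  have hw : 0 < (N + 1) * t := by linarith
  have hfactor : s * (momentFactor l (3 / 2) + momentFactor l (1 / 6) * 1.021) ≤
      2 * 1.02 * (2 ^ l * (s + 1 / 4)) * (1 - 0.0001) := by
    interval_cases l <;> norm_num [momentFactor] <;> linarith
  have hmass := (abs_le.1 (abs_gnorm_sub_le hs hev hN)).1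
  have hdecay := decay_nonneg hev N t
  rw [div_le_iff₀ (gnorm_pos hs hev hN)]
  calc ‖sampledSum (weightedSpline s l) N t‖
      ≤ (N + 1) * (2 / ((N + 1) * t) ^ s) * (2 * 1.02 * (2 ^ l * (s + 1 / 4)) * (1 - 0.0001)) :=
        (norm_sampledSum_weightedSpline_le hl hs hN hπ hst).trans
          (mul_le_mul_of_nonneg_left hfactor (by positivity))
    _ = 2 ^ l * (s + 1 / 4) * decay s N t * ((N + 1) * splineMass s * (1 - 0.0001)) := by
        rw [decay]
        linear_combination -(1.02 * (2 ^ l * (s + 1 / 4)) * (N + 1) * (1 - 0.0001) /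
          ((N + 1) * t) ^ s) * splineMass_mul_factorial s
    _ ≤ _ := by
        gcongr
        linarith

end Discretisation

section Kernel

open Finset Polynomial

variable {s N : ℕ} {t : ℝ}

/-- The algebraic polynomial in `cos t` that represents the cosine sum `∑ c k * cos (k * t)`. -/
noncomputable def cosPoly (S : Finset ℤ) (c : ℤ → ℝ) : ℝ[X] :=
  ∑ k ∈ S, C (c k) * Chebyshev.T ℝ k

lemma cosPoly_eval_cos (S : Finset ℤ) (c : ℤ → ℝ) (t : ℝ) :
    (cosPoly S c).eval (Real.cos t) = ∑ k ∈ S, c k * Real.cos (k * t) := by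
  simp only [cosPoly, eval_finsetSum, eval_mul, eval_C, Chebyshev.T_real_cos]

lemma hasDerivAt_eval_cos (P : ℝ[X]) (t : ℝ) :
    HasDerivAt (fun t => P.eval (Real.cos t)) (P.derivative.eval (Real.cos t) * -Real.sin t) t :=
  (P.hasDerivAt (Real.cos t)).comp t (Real.hasDerivAt_cos t)

lemma derivative_cosPoly_eval_cos (S : Finset ℤ) (c : ℤ → ℝ) (t : ℝ) :
    (cosPoly S c).derivative.eval (Real.cos t) * Real.sin t =
      ∑ k ∈ S, k * c k * Real.sin (k * t) := by
  have h := hasDerivAt_eval_cos (cosPoly S c) t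
  simp_rw [cosPoly_eval_cos] at h
  rw [← neg_inj, ← mul_neg, h.unique <| HasDerivAt.fun_sum fun k _ =>
    (((hasDerivAt_id t).const_mul (k : ℝ)).cos).const_mul (c k), ← sum_neg_distrib]
  exact sum_congr rfl fun k _ => by simp only [id]; ring

lemma derivative_derivative_cosPoly_eval_cos (S : Finset ℤ) (c : ℤ → ℝ) (t : ℝ) :
    (cosPoly S c).derivative.eval (Real.cos t) * Real.cos t -
        (cosPoly S c).derivative.derivative.eval (Real.cos t) * Real.sin t ^ 2 =
      ∑ k ∈ S, k ^ 2 * c k * Real.cos (k * t) := by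
  have h := (hasDerivAt_eval_cos (cosPoly S c).derivative t).mul (Real.hasDerivAt_sin t)
  have hfun : ((fun t => (cosPoly S c).derivative.eval (Real.cos t)) * Real.sin) =
      fun t => ∑ k ∈ S, k * c k * Real.sin (k * t) :=
    funext (derivative_cosPoly_eval_cos S c)
  rw [hfun] at h
  have hsum := h.unique <| HasDerivAt.fun_sum fun k _ =>
    (((hasDerivAt_id t).const_mul (k : ℝ)).sin).const_mul (k * c k)
  calc _ = (cosPoly S c).derivative.derivative.eval (Real.cos t) * -Real.sin t * Real.sin t +
        (cosPoly S c).derivative.eval (Real.cos t) * Real.cos t := by ring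
    _ = _ := hsum
    _ = _ := sum_congr rfl fun k _ => by simp only [id]; ring

/-- The polynomial in `cos t` that represents the trigonometric kernel `sigmaT s N t`. -/
noncomputable def kernelPoly (s N : ℕ) : ℝ[X] :=
  cosPoly (Icc (-(N : ℤ)) N) fun k => altSpline s (s - 1) (k / (N + 1)) / gnorm s N

lemma sampledSum_weightedSpline_eq (s N l : ℕ) (t : ℝ) :
    sampledSum (weightedSpline s l) N t = ∑ k ∈ Icc (-(N : ℤ)) N,
      ((k / (N + 1)) ^ l * altSpline s (s - 1) (k / (N + 1)) : ℝ) *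
        Complex.exp ((k * t : ℝ) * Complex.I) := by
  simp [sampledSum, weightedSpline]

lemma kernelPoly_eval_cos (s N : ℕ) (t : ℝ) :
    (kernelPoly s N).eval (Real.cos t) =
      (sampledSum (weightedSpline s 0) N t).re / gnorm s N := by
  rw [kernelPoly, cosPoly_eval_cos, sampledSum_weightedSpline_eq, Complex.re_sum, sum_div]
  refine sum_congr rfl fun k _ => ?_
  rw [Complex.re_ofReal_mul, Complex.exp_ofReal_mul_I_re]
  ring

lemma derivative_kernelPoly_eval_cos (s N : ℕ) (t : ℝ) :
    (kernelPoly s N).derivative.eval (Real.cos t) * Real.sin t =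
      (N + 1) * ((sampledSum (weightedSpline s 1) N t).im / gnorm s N) := by
  rw [kernelPoly, derivative_cosPoly_eval_cos, sampledSum_weightedSpline_eq, Complex.im_sum,
    sum_div, mul_sum]
  refine sum_congr rfl fun k _ => ?_
  rw [Complex.im_ofReal_mul, Complex.exp_ofReal_mul_I_im]
  field_simp

lemma derivative_derivative_kernelPoly_eval_cos (s N : ℕ) (t : ℝ) :
    (kernelPoly s N).derivative.eval (Real.cos t) * Real.cos t -
        (kernelPoly s N).derivative.derivative.eval (Real.cos t) * Real.sin t ^ 2 =
      (N + 1) ^ 2 * ((sampledSum (weightedSpline s 2) N t).re / gnorm s N) := by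
  rw [kernelPoly, derivative_derivative_cosPoly_eval_cos, sampledSum_weightedSpline_eq,
    Complex.re_sum, sum_div, mul_sum]
  refine sum_congr rfl fun k _ => ?_
  rw [Complex.re_ofReal_mul, Complex.exp_ofReal_mul_I_re]
  field_simp

lemma sigmaT_eq_eval (hs : 2 ≤ s) (hev : Even s) (N : ℕ) (t : ℝ) :
    sigmaT s N t = (kernelPoly s N).eval (Real.cos t) := by
  have hsum : ∑ k ∈ Icc (-(N : ℤ)) N, (gtilde s ((k : ℝ) / (2 * ((N : ℝ) + 1))) : ℂ) *
      Complex.exp ((k : ℂ) * t * Complex.I) = sampledSum (weightedSpline s 0) N t := by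
    refine sum_congr rfl fun k hk => ?_
    rw [gtilde_eq_altSpline hs hev hk]
    simp [weightedSpline]
  rw [kernelPoly_eval_cos, sigmaT, hsum, ← Complex.ofReal_one, ← Complex.ofReal_div,
    Complex.re_ofReal_mul, one_div_mul_eq_div]

lemma kernelPoly_eval_one (hs : 6 ≤ s) (hev : Even s) (hN : 2 * s ≤ N) :
    (kernelPoly s N).eval 1 = 1 := by
  rw [← Real.cos_zero, kernelPoly_eval_cos, ← ofReal_gnorm (by omega) hev, Complex.ofReal_re,
    Real.cos_zero, div_self (gnorm_pos hs hev hN).ne']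

theorem derivative_kernelPoly_eval_one_ge (hs : 6 ≤ s) (hev : Even s) (hN : 2 * s ≤ N) :
    0.999 / (2 * ((s : ℝ) + 1)) * (N + 1) ^ 2 ≤ (kernelPoly s N).derivative.eval 1 := by
  have h := derivative_derivative_kernelPoly_eval_cos s N 0
  rw [Real.sin_zero, Real.cos_zero, zero_pow two_ne_zero, mul_zero, sub_zero, mul_one] at h
  rw [h, mul_comm]
  exact mul_le_mul_of_nonneg_left (re_sampledSum_two_div_gnorm_ge hs hev hN) (by positivity)

theorem kernelPoly_bounds (hs : 6 ≤ s) (hev : Even s) (hN : 2 * s ≤ N) (hπ : t ≤ π)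
    (hst : 2 * s / 3 ≤ (N + 1) * t) :
    |(kernelPoly s N).eval (Real.cos t)| ≤ (s + 1 / 4) * decay s N t ∧
    |(kernelPoly s N).derivative.eval (Real.cos t) * Real.sin t| ≤
      (N + 1) * ((2 * s + 1 / 2) * decay s N t) ∧
    |(kernelPoly s N).derivative.eval (Real.cos t) * Real.cos t -
        (kernelPoly s N).derivative.derivative.eval (Real.cos t) * Real.sin t ^ 2| ≤
      (N + 1) ^ 2 * ((4 * s + 1) * decay s N t) := by
  have hnorm {l : ℕ} (hl : l ≤ 2) := norm_sampledSum_div_gnorm_le hl hs hev hN hπ hst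
  have hg := gnorm_pos hs hev hN
  have habs {z : ℂ} {x : ℝ} (hx : |x| ≤ ‖z‖) : |x / gnorm s N| ≤ ‖z‖ / gnorm s N := by
    rw [abs_div, abs_of_pos hg]
    gcongr
  have hN1 : (0 : ℝ) < N + 1 := by positivity
  rw [derivative_derivative_kernelPoly_eval_cos, derivative_kernelPoly_eval_cos,
    kernelPoly_eval_cos, abs_mul, abs_mul, abs_of_pos hN1, abs_of_pos (pow_pos hN1 2)]
  refine ⟨(habs (Complex.abs_re_le_norm _)).trans ((hnorm zero_le_two).trans_eq (by ring)), ?_, ?_⟩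
  · gcongr
    exact (habs (Complex.abs_im_le_norm _)).trans ((hnorm one_le_two).trans_eq (by ring))
  · gcongr
    exact (habs (Complex.abs_re_le_norm _)).trans ((hnorm le_rfl).trans_eq (by ring))

end Kernel

section Rotation

open scoped Matrix

/-- The cosine of the rotation angle of a rotation matrix, as a linear function of its trace. -/
noncomputable def cosAngle (z : Mat3) : ℝ := (z.trace - 1) / 2

lemma IsSO3.mul_transpose {z : Mat3} (hz : IsSO3 z) : z * zᵀ = 1 :=
  mul_eq_one_comm.1 hz.1

lemma IsSO3.inv_eq {z : Mat3} (hz : IsSO3 z) : z⁻¹ = zᵀ :=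
  Matrix.inv_eq_left_inv hz.1

lemma IsSO3.transpose {z : Mat3} (hz : IsSO3 z) : IsSO3 zᵀ :=
  ⟨by rw [Matrix.transpose_transpose, hz.mul_transpose], by rw [Matrix.det_transpose, hz.2]⟩

lemma IsSO3.mul {z w : Mat3} (hz : IsSO3 z) (hw : IsSO3 w) : IsSO3 (z * w) :=
  ⟨by rw [Matrix.transpose_mul, mul_assoc, ← mul_assoc zᵀ, hz.1, one_mul, hw.1],
    by rw [Matrix.det_mul, hz.2, hw.2, mul_one]⟩

lemma IsSO3.inv_mul {z w : Mat3} (hz : IsSO3 z) (hw : IsSO3 w) : IsSO3 (z⁻¹ * w) := by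
  rw [hz.inv_eq]
  exact hz.transpose.mul hw

lemma IsSO3.adjugate_eq {z : Mat3} (hz : IsSO3 z) : z.adjugate = zᵀ :=
  calc z.adjugate = zᵀ * z * z.adjugate := by rw [hz.1, one_mul]
    _ = zᵀ := by rw [mul_assoc, Matrix.mul_adjugate, hz.2, one_smul, mul_one]

/-- The rotation matrix of the quaternion `q 0 + q 1 i + q 2 j + q 3 k`. -/
noncomputable def quatMat (q : Fin 4 → ℝ) : Mat3 :=
  !![q 0 ^ 2 + q 1 ^ 2 - q 2 ^ 2 - q 3 ^ 2, 2 * (q 1 * q 2 - q 0 * q 3),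
      2 * (q 1 * q 3 + q 0 * q 2);
    2 * (q 1 * q 2 + q 0 * q 3), q 0 ^ 2 - q 1 ^ 2 + q 2 ^ 2 - q 3 ^ 2,
      2 * (q 2 * q 3 - q 0 * q 1);
    2 * (q 1 * q 3 - q 0 * q 2), 2 * (q 2 * q 3 + q 0 * q 1),
      q 0 ^ 2 - q 1 ^ 2 - q 2 ^ 2 + q 3 ^ 2]

/-- The matrix which, for `z = quatMat q` with `q` a unit quaternion, has the entries
`4 * (q i * q j)`; it recovers `q` from `z` up to sign. -/
noncomputable def quatGram (z : Mat3) : Matrix (Fin 4) (Fin 4) ℝ :=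
  !![1 + z 0 0 + z 1 1 + z 2 2, z 2 1 - z 1 2, z 0 2 - z 2 0, z 1 0 - z 0 1;
    z 2 1 - z 1 2, 1 + z 0 0 - z 1 1 - z 2 2, z 0 1 + z 1 0, z 0 2 + z 2 0;
    z 0 2 - z 2 0, z 0 1 + z 1 0, 1 - z 0 0 + z 1 1 - z 2 2, z 1 2 + z 2 1;
    z 1 0 - z 0 1, z 0 2 + z 2 0, z 1 2 + z 2 1, 1 - z 0 0 - z 1 1 + z 2 2]

lemma exists_quatGram_self_pos (z : Mat3) : ∃ k, 0 < quatGram z k k := by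
  have h : ∑ _k : Fin 4, (0 : ℝ) < ∑ k, quatGram z k k := by
    simp only [Finset.sum_const_zero, Fin.sum_univ_four, quatGram, Matrix.of_apply, Matrix.cons_val]
    linarith
  simpa using Finset.exists_lt_of_sum_lt h

lemma IsSO3.quatGram_mul_quatGram {z : Mat3} (hz : IsSO3 z) (i j k : Fin 4) :
    quatGram z i k * quatGram z j k = quatGram z i j * quatGram z k k := by
  have columns := congrFun₂ hz.1
  have rows := congrFun₂ hz.mul_transpose
  have cofactors := congrFun₂ hz.adjugate_eq
  simp only [Matrix.adjugate_fin_three, Matrix.mul_apply, Matrix.transpose_apply,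
    Fin.sum_univ_three, Fin.forall_fin_succ, Fin.isValue, Fin.succ_zero_eq_one,
    Fin.succ_one_eq_two, IsEmpty.forall_iff, and_true, Matrix.of_apply, Matrix.cons_val,
    Matrix.one_apply, Fin.reduceEq, if_true, if_false] at columns rows cofactors
  fin_cases k <;> fin_cases i <;> fin_cases j <;>
    simp only [quatGram, Matrix.of_apply, Matrix.cons_val, Fin.reduceFinMk, Fin.isValue,
      Fin.zero_eta, Fin.mk_one] <;> grind

lemma exists_mul_eq_of_rank_one {ι : Type*} {Q : ι → ι → ℝ} {k : ι} (hk : 0 < Q k k)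
    (h : ∀ i j, Q i k * Q j k = Q i j * Q k k) : ∃ q : ι → ℝ, ∀ i j, q i * q j = Q i j := by
  refine ⟨fun i => Q i k / √(Q k k), fun i j => ?_⟩
  rw [div_mul_div_comm, Real.mul_self_sqrt hk.le, h, mul_div_cancel_right₀ _ hk.ne']

lemma eq_quatMat_of_quatGram {z : Mat3} {q : Fin 4 → ℝ}
    (hq : ∀ i j, 4 * (q i * q j) = quatGram z i j) : ∑ i, q i ^ 2 = 1 ∧ z = quatMat q := by
  simp only [quatGram, Matrix.of_apply, Matrix.cons_val, Fin.forall_fin_succ, Fin.isValue,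
    Fin.succ_zero_eq_one, Fin.succ_one_eq_two, Fin.reduceSucc, IsEmpty.forall_iff, and_true] at hq
  obtain ⟨⟨q00, q01, q02, q03⟩, ⟨-, q11, q12, q13⟩, ⟨-, -, q22, q23⟩, -, -, -, q33⟩ := hq
  refine ⟨by rw [Fin.sum_univ_four]; linarith, ?_⟩
  ext i j
  fin_cases i <;> fin_cases j <;>
    simp only [quatMat, Matrix.of_apply, Matrix.cons_val, Fin.reduceFinMk, Fin.isValue,
      Fin.zero_eta, Fin.mk_one] <;> linarith

lemma IsSO3.exists_quatMat {z : Mat3} (hz : IsSO3 z) :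
    ∃ q : Fin 4 → ℝ, 0 ≤ q 0 ∧ ∑ i, q i ^ 2 = 1 ∧ z = quatMat q := by
  obtain ⟨k, hk⟩ := exists_quatGram_self_pos z
  obtain ⟨q, hq⟩ := exists_mul_eq_of_rank_one (Q := fun i j => quatGram z i j / 4)
    (by positivity : 0 < quatGram z k k / 4) fun i j => by
      rw [div_mul_div_comm, hz.quatGram_mul_quatGram, ← div_mul_div_comm]
  have hq4 : ∀ i j, 4 * (q i * q j) = quatGram z i j := fun i j => by
    rw [hq, mul_div_cancel₀ _ four_ne_zero]
  rcases le_total 0 (q 0) with h | h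
  · exact ⟨q, h, eq_quatMat_of_quatGram hq4⟩
  · refine ⟨-q, neg_nonneg.2 h, eq_quatMat_of_quatGram fun i j => ?_⟩
    rw [Pi.neg_apply, Pi.neg_apply, neg_mul_neg, hq4]

lemma sq_zero_le_one {n : ℕ} {q : Fin (n + 1) → ℝ} (hq : ∑ i, q i ^ 2 = 1) : q 0 ^ 2 ≤ 1 :=
  hq ▸ Finset.single_le_sum (f := fun i => q i ^ 2) (fun _ _ => sq_nonneg _) (Finset.mem_univ 0)

lemma cosAngle_quatMat {q : Fin 4 → ℝ} (hq : ∑ i, q i ^ 2 = 1) :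
    cosAngle (quatMat q) = 2 * q 0 ^ 2 - 1 := by
  rw [Fin.sum_univ_four] at hq
  simp only [cosAngle, Matrix.trace_fin_three, quatMat, Matrix.of_apply, Matrix.cons_val]
  linarith

lemma arccos_two_mul_sq_sub_one {a : ℝ} (h0 : 0 ≤ a) (h1 : a ≤ 1) :
    Real.arccos (2 * a ^ 2 - 1) = 2 * Real.arccos a := by
  have h2 : Real.arccos a ≤ π / 2 := Real.arccos_le_pi_div_two.2 h0
  rw [← Real.arccos_cos (x := 2 * Real.arccos a) (by linarith [Real.arccos_nonneg a])
    (by linarith), Real.cos_two_mul, Real.cos_arccos (by linarith) h1]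

lemma rotAngle_quatMat {q : Fin 4 → ℝ} (hq : ∑ i, q i ^ 2 = 1) (h0 : 0 ≤ q 0) :
    rotAngle (quatMat q) = 2 * Real.arccos (q 0) := by
  change Real.arccos (cosAngle (quatMat q)) = _
  rw [cosAngle_quatMat hq,
    arccos_two_mul_sq_sub_one h0 ((sq_le_one_iff₀ h0).1 (sq_zero_le_one hq))]

lemma IsSO3.cos_rotAngle {z : Mat3} (hz : IsSO3 z) : Real.cos (rotAngle z) = cosAngle z := by
  obtain ⟨q, h0, hq, rfl⟩ := hz.exists_quatMat
  have h1 := sq_zero_le_one hq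
  rw [rotAngle_quatMat hq h0, cosAngle_quatMat hq, Real.cos_two_mul,
    Real.cos_arccos (by linarith) ((sq_le_one_iff₀ h0).1 h1)]

lemma cosAngle_quatMat_mul_transpose {p q : Fin 4 → ℝ} (hp : ∑ i, p i ^ 2 = 1)
    (hq : ∑ i, q i ^ 2 = 1) :
    cosAngle (quatMat p * (quatMat q)ᵀ) = 2 * (p ⬝ᵥ q) ^ 2 - 1 := by
  have trace_eq : (quatMat p * (quatMat q)ᵀ).trace =
      4 * (p ⬝ᵥ q) ^ 2 - (∑ i, p i ^ 2) * ∑ i, q i ^ 2 := by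
    simp only [Matrix.trace_fin_three, Matrix.mul_apply, Matrix.transpose_apply, quatMat,
      Matrix.of_apply, Matrix.cons_val, dotProduct, Fin.sum_univ_three, Fin.sum_univ_four]
    ring
  rw [cosAngle, trace_eq, hp, hq]
  ring

end Rotation

section LogChart

open scoped Matrix

lemma monotoneOn_neg_sin_sqrt_div :
    MonotoneOn (fun x : ℝ => -Real.sin √x * (1 / (2 * √x))) (Set.Ioo 0 (π ^ 2)) := by
  intro x hx y hy hxy
  have hx0 : 0 < √x := Real.sqrt_pos.2 hx.1
  have hle : √x ≤ √y := Real.sqrt_le_sqrt hxy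
  have hyπ : √y ≤ π := Real.sqrt_le_iff.2 ⟨Real.pi_pos.le, hy.2.le⟩
  have hsecant := strictConcaveOn_sin_Icc.concaveOn.neg.secant_mono (a := 0) (x := √x) (y := √y)
    ⟨le_rfl, Real.pi_pos.le⟩ ⟨hx0.le, hle.trans hyπ⟩ ⟨(hx0.trans_le hle).le, hyπ⟩ hx0.ne'
    (hx0.trans_le hle).ne' hle
  simp only [Pi.neg_apply, Real.sin_zero, neg_zero, sub_zero] at hsecant
  have neg_half_sinc : ∀ u : ℝ, -Real.sin u * (1 / (2 * u)) = -Real.sin u / u / 2 :=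
    fun u => by ring
  simp only [neg_half_sinc]
  linarith

lemma convexOn_cos_sqrt : ConvexOn ℝ (Set.Icc 0 (π ^ 2)) fun x : ℝ => Real.cos √x := by
  have hd : ∀ x ∈ Set.Ioo (0 : ℝ) (π ^ 2),
      HasDerivAt (fun x : ℝ => Real.cos √x) (-Real.sin √x * (1 / (2 * √x))) x :=
    fun x hx => (Real.hasDerivAt_sqrt hx.1.ne').cos
  refine MonotoneOn.convexOn_of_deriv (convex_Icc _ _) (by fun_prop) ?_ ?_ <;> rw [interior_Icc]
  · exact fun x hx => (hd x hx).differentiableAt.differentiableWithinAt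
  · exact monotoneOn_neg_sin_sqrt_div.congr fun x hx => (hd x hx).deriv.symm

/-- Both sides are functions of `c` with the same values at `c = ±1`; the right-hand side is
affine and the left-hand side convex. -/
lemma cos_sqrt_le {A B c : ℝ} (hA : 0 ≤ A) (hA' : A ≤ π / 2) (hB : 0 ≤ B) (hB' : B ≤ π / 2)
    (hc : |c| ≤ 1) :
    Real.cos √(A ^ 2 + B ^ 2 - 2 * A * B * c) ≤
      Real.cos A * Real.cos B + Real.sin A * Real.sin B * c := by
  obtain ⟨hc₁, hc₂⟩ := abs_le.1 hc
  have hab : 0 ≤ A * B := mul_nonneg hA hB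
  have h := convexOn_cos_sqrt.2 (x := (A - B) ^ 2) (y := (A + B) ^ 2)
    ⟨sq_nonneg _, by nlinarith⟩ ⟨sq_nonneg _, by nlinarith⟩
    (show 0 ≤ (1 + c) / 2 by linarith) (show 0 ≤ (1 - c) / 2 by linarith) (by ring)
  simp only [smul_eq_mul] at h
  rw [Real.sqrt_sq_eq_abs, Real.sqrt_sq_eq_abs, Real.cos_abs, Real.cos_abs, Real.cos_sub,
    Real.cos_add] at h
  rw [show A ^ 2 + B ^ 2 - 2 * A * B * c =
    (1 + c) / 2 * (A - B) ^ 2 + (1 - c) / 2 * (A + B) ^ 2 by ring]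
  linarith

variable {n : ℕ} {p q : Fin (n + 1) → ℝ}

/-- The logarithm of the unit sphere of `Fin (n + 1) → ℝ` at the pole `Pi.single 0 1`, its value
at the pole being `0 / 0 = 0`. -/
noncomputable def sphereLog (q : Fin (n + 1) → ℝ) : EuclideanSpace ℝ (Fin n) :=
  WithLp.toLp 2 fun i => Real.arccos (q 0) / Real.sin (Real.arccos (q 0)) * q i.succ

lemma sin_arccos_sq (hq : ∑ i, q i ^ 2 = 1) :
    Real.sin (Real.arccos (q 0)) ^ 2 = ∑ i : Fin n, q i.succ ^ 2 := by
  rw [Real.sin_arccos, Real.sq_sqrt (by linarith [sq_zero_le_one hq])]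
  rw [Fin.sum_univ_succ] at hq
  linarith

lemma sin_arccos_pos {a : ℝ} (h0 : 0 ≤ a) (h : 0 < Real.arccos a) :
    0 < Real.sin (Real.arccos a) :=
  Real.sin_pos_of_pos_of_lt_pi h
    (by linarith [Real.arccos_le_pi_div_two.2 h0, Real.pi_pos])

lemma norm_sphereLog (hq : ∑ i, q i ^ 2 = 1) (h0 : 0 ≤ q 0) :
    ‖sphereLog q‖ = Real.arccos (q 0) := by
  have hA := Real.arccos_nonneg (q 0)
  refine (sq_eq_sq₀ (norm_nonneg _) hA).1 ?_
  simp only [EuclideanSpace.norm_sq_eq, sphereLog, Real.norm_eq_abs, sq_abs, mul_pow,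
    ← Finset.mul_sum]
  rw [← sin_arccos_sq hq]
  rcases hA.eq_or_lt with h | h
  · rw [← h]
    simp
  · rw [← mul_pow, div_mul_cancel₀ _ (sin_arccos_pos h0 h).ne']

lemma inner_sphereLog (p q : Fin (n + 1) → ℝ) :
    inner ℝ (sphereLog p) (sphereLog q) = Real.arccos (p 0) * Real.arccos (q 0) *
      ((∑ i : Fin n, p i.succ * q i.succ) /
        (Real.sin (Real.arccos (p 0)) * Real.sin (Real.arccos (q 0)))) := by
  simp only [sphereLog, PiLp.inner_apply, RCLike.inner_apply, conj_trivial, Finset.sum_div,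
    Finset.mul_sum]
  exact Finset.sum_congr rfl fun i _ => by ring

lemma abs_sum_succ_mul_le (hp : ∑ i, p i ^ 2 = 1) (hq : ∑ i, q i ^ 2 = 1) :
    |∑ i : Fin n, p i.succ * q i.succ| ≤
      Real.sin (Real.arccos (p 0)) * Real.sin (Real.arccos (q 0)) := by
  have hsin : ∀ a : ℝ, 0 ≤ Real.sin (Real.arccos a) := fun a =>
    Real.sin_nonneg_of_nonneg_of_le_pi (Real.arccos_nonneg a) (Real.arccos_le_pi a)
  refine abs_le_of_sq_le_sq ?_ (mul_nonneg (hsin _) (hsin _))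
  rw [mul_pow, sin_arccos_sq hp, sin_arccos_sq hq]
  exact Finset.sum_mul_sq_le_sq_mul_sq _ _ _

lemma cos_norm_sphereLog_sub_le (hp : ∑ i, p i ^ 2 = 1) (hq : ∑ i, q i ^ 2 = 1)
    (hp0 : 0 ≤ p 0) (hq0 : 0 ≤ q 0) :
    Real.cos ‖sphereLog p - sphereLog q‖ ≤ p ⬝ᵥ q := by
  have hinner := abs_sum_succ_mul_le hp hq
  set a := Real.sin (Real.arccos (p 0)) * Real.sin (Real.arccos (q 0)) with ha
  have ha0 : 0 ≤ a := (abs_nonneg _).trans hinner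
  have hmain := cos_sqrt_le (c := (∑ i : Fin n, p i.succ * q i.succ) / a)
    (Real.arccos_nonneg (p 0)) (Real.arccos_le_pi_div_two.2 hp0)
    (Real.arccos_nonneg (q 0)) (Real.arccos_le_pi_div_two.2 hq0)
    (by rw [abs_div, abs_of_nonneg ha0]; exact div_le_one_of_le₀ hinner ha0)
  have hnorm : Real.arccos (p 0) ^ 2 + Real.arccos (q 0) ^ 2 - 2 * Real.arccos (p 0) *
      Real.arccos (q 0) * ((∑ i : Fin n, p i.succ * q i.succ) / a) =
        ‖sphereLog p - sphereLog q‖ ^ 2 := by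
    rw [norm_sub_sq_real, norm_sphereLog hp hp0, norm_sphereLog hq hq0, inner_sphereLog]
    ring
  rw [hnorm, Real.sqrt_sq (norm_nonneg _), ← ha,
    mul_div_cancel_of_imp' fun h => abs_nonpos_iff.1 (h ▸ hinner),
    Real.cos_arccos (by linarith) ((sq_le_one_iff₀ hp0).1 (sq_zero_le_one hp)),
    Real.cos_arccos (by linarith) ((sq_le_one_iff₀ hq0).1 (sq_zero_le_one hq))] at hmain
  rwa [dotProduct, Fin.sum_univ_succ]

lemma arccos_dotProduct_le_norm_sphereLog_sub (hp : ∑ i, p i ^ 2 = 1) (hq : ∑ i, q i ^ 2 = 1)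
    (hp0 : 0 ≤ p 0) (hq0 : 0 ≤ q 0) :
    Real.arccos (p ⬝ᵥ q) ≤ ‖sphereLog p - sphereLog q‖ := by
  have hπ : ‖sphereLog p - sphereLog q‖ ≤ π := by
    refine (norm_sub_le _ _).trans ?_
    rw [norm_sphereLog hp hp0, norm_sphereLog hq hq0]
    linarith [Real.arccos_le_pi_div_two.2 hp0, Real.arccos_le_pi_div_two.2 hq0]
  calc Real.arccos (p ⬝ᵥ q) ≤ Real.arccos (Real.cos ‖sphereLog p - sphereLog q‖) :=
        Real.arccos_le_arccos (cos_norm_sphereLog_sub_le hp hq hp0 hq0)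
    _ = ‖sphereLog p - sphereLog q‖ := Real.arccos_cos (norm_nonneg _) hπ

lemma rotAngle_quatMat_mul_transpose_le {p q : Fin 4 → ℝ} (hp : ∑ i, p i ^ 2 = 1)
    (hq : ∑ i, q i ^ 2 = 1) :
    rotAngle (quatMat p * (quatMat q)ᵀ) ≤ 2 * Real.arccos (p ⬝ᵥ q) := by
  have hcs : |p ⬝ᵥ q| ≤ 1 := by
    have h := Finset.sum_mul_sq_le_sq_mul_sq Finset.univ p q
    rwa [hp, hq, mul_one, sq_le_one_iff_abs_le_one] at h
  change Real.arccos (cosAngle _) ≤ _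
  rw [cosAngle_quatMat_mul_transpose hp hq, ← sq_abs, arccos_two_mul_sq_sub_one (abs_nonneg _) hcs]
  linarith [Real.arccos_le_arccos (le_abs_self (p ⬝ᵥ q))]

lemma exists_expanding_log_chart : ∃ u : Mat3 → EuclideanSpace ℝ (Fin 3),
    (∀ z, IsSO3 z → ‖u z‖ = rotAngle z) ∧
    ∀ z w, IsSO3 z → IsSO3 w → rotAngle (z * wᵀ) ≤ ‖u z - u w‖ := by
  choose! q hq0 hq hz using fun (z : Mat3) (hz : IsSO3 z) => hz.exists_quatMat
  refine ⟨fun z => (2 : ℝ) • sphereLog (q z), fun z h => ?_, fun z w h h' => ?_⟩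
  · rw [norm_smul, norm_sphereLog (hq z h) (hq0 z h), Real.norm_two,
      ← rotAngle_quatMat (hq z h) (hq0 z h), ← hz z h]
  · rw [← smul_sub, norm_smul, Real.norm_two]
    calc rotAngle (z * wᵀ) = rotAngle (quatMat (q z) * (quatMat (q w))ᵀ) := by
          rw [← hz z h, ← hz w h']
      _ ≤ 2 * Real.arccos (q z ⬝ᵥ q w) := rotAngle_quatMat_mul_transpose_le (hq z h) (hq w h')
      _ ≤ 2 * ‖sphereLog (q z) - sphereLog (q w)‖ := by
          gcongr
          exact arccos_dotProduct_le_norm_sphereLog_sub (hq z h) (hq w h') (hq0 z h) (hq0 w h')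

end LogChart

section Packing

open Finset MeasureTheory Metric Module

lemma card_mul_pow_le_of_shell {E ι : Type*} [NormedAddCommGroup E] [NormedSpace ℝ E]
    [FiniteDimensional ℝ E] (S : Finset ι) (u : ι → E) {δ r R : ℝ} (hδ : 0 < δ) (hr : δ / 2 < r)
    (hrR : r ≤ R) (hlower : ∀ i ∈ S, r ≤ ‖u i‖) (hupper : ∀ i ∈ S, ‖u i‖ ≤ R)
    (hsep : ∀ i ∈ S, ∀ j ∈ S, i ≠ j → δ ≤ ‖u i - u j‖) :
    #S * (δ / 2) ^ finrank ℝ E + (r - δ / 2) ^ finrank ℝ E ≤ (R + δ / 2) ^ finrank ℝ E := by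
  borelize E
  let μ : Measure E := Measure.addHaar
  have volume_ball : ∀ (x : E) {ρ : ℝ}, 0 < ρ →
      μ.real (ball x ρ) = ρ ^ finrank ℝ E * μ.real (ball 0 1) := fun x ρ hρ => by
    rw [measureReal_def, Measure.addHaar_ball_of_pos _ x hρ, ENNReal.toReal_mul,
      ENNReal.toReal_ofReal (by positivity), measureReal_def]
  have volume_unit_ball_pos : 0 < μ.real (ball 0 1) :=
    ENNReal.toReal_pos (measure_ball_pos _ _ one_pos).ne' measure_ball_lt_top.ne
  have union_disjoint : Disjoint (⋃ i ∈ S, ball (u i) (δ / 2)) (ball 0 (r - δ / 2)) := by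
    simp only [Set.disjoint_iUnion_left]
    intro i hi
    refine ball_disjoint_ball ?_
    rw [dist_zero_right]
    linarith [hlower i hi]
  have union_subset : (⋃ i ∈ S, ball (u i) (δ / 2)) ∪ ball 0 (r - δ / 2) ⊆
      ball 0 (R + δ / 2) := by
    refine Set.union_subset (Set.iUnion₂_subset fun i hi => ball_subset_ball' ?_)
      (ball_subset_ball (by linarith))
    rw [dist_zero_right]
    linarith [hupper i hi]
  have hle := measureReal_mono (μ := μ) union_subset measure_ball_lt_top.ne
  rw [measureReal_union union_disjoint measurableSet_ball
      ((measure_mono (Set.subset_union_left.trans union_subset)).trans_lt measure_ball_lt_top).ne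
      measure_ball_lt_top.ne,
    measureReal_biUnion_finset
      (fun i hi j hj hij => ball_disjoint_ball (by
        rw [dist_eq_norm]
        linarith [hsep i hi j hj hij]))
      fun _ _ => measurableSet_ball,
    sum_congr rfl fun i _ => volume_ball (u i) (half_pos hδ), sum_const, nsmul_eq_mul,
    volume_ball 0 (sub_pos.2 hr),
    volume_ball 0 (show 0 < R + δ / 2 by linarith), ← mul_assoc, ← add_mul] at hle
  exact le_of_mul_le_mul_right hle volume_unit_ball_pos

variable {ι : Type*} {S : Finset ι} {u : ι → EuclideanSpace ℝ (Fin 3)} {δ : ℝ}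

lemma card_shell_le (hδ : 0 < δ) {m : ℕ} (hm : 1 ≤ m) (hlower : ∀ i ∈ S, m * δ ≤ ‖u i‖)
    (hupper : ∀ i ∈ S, ‖u i‖ ≤ (m + 1) * δ)
    (hsep : ∀ i ∈ S, ∀ j ∈ S, i ≠ j → δ ≤ ‖u i - u j‖) : (#S : ℝ) ≤ 124 * m ^ 2 := by
  have hm' : (1 : ℝ) ≤ m := by exact_mod_cast hm
  have h := card_mul_pow_le_of_shell S u hδ (by nlinarith) (by linarith) hlower hupper hsep
  rw [finrank_euclideanSpace_fin] at h
  have hcard : (#S : ℝ) ≤ (2 * m + 3) ^ 3 - (2 * m - 1) ^ 3 := by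
    refine le_of_mul_le_mul_right ?_ (show 0 < δ ^ 3 / 8 by positivity)
    linarith
  nlinarith

lemma summable_one_div_add_one_pow {m : ℕ} (hm : 2 ≤ m) :
    Summable fun n : ℕ => (1 : ℝ) / ((n : ℝ) + 1) ^ m :=
  ((summable_nat_add_iff 1).2 (Real.summable_one_div_nat_pow.2 (show 1 < m by omega))).congr
    fun n => by push_cast; rfl

lemma sum_shell_one_div_norm_pow_le (hδ : 0 < δ) {m s : ℕ} (hm : 1 ≤ m) (hs : 2 ≤ s)
    (hlower : ∀ i ∈ S, m * δ ≤ ‖u i‖) (hupper : ∀ i ∈ S, ‖u i‖ ≤ (m + 1) * δ)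
    (hsep : ∀ i ∈ S, ∀ j ∈ S, i ≠ j → δ ≤ ‖u i - u j‖) :
    ∑ i ∈ S, 1 / ‖u i‖ ^ s ≤ 124 / δ ^ s * (1 / (m : ℝ) ^ (s - 2)) := by
  have : (0 : ℝ) < m := by exact_mod_cast hm
  calc ∑ i ∈ S, 1 / ‖u i‖ ^ s ≤ ∑ _i ∈ S, 1 / (m * δ) ^ s :=
        sum_le_sum fun i hi => by
          have := hlower i hi
          gcongr
    _ = #S * (1 / (m * δ) ^ s) := by rw [sum_const, nsmul_eq_mul]
    _ ≤ 124 * (m : ℝ) ^ 2 * (1 / (m * δ) ^ s) := by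
        gcongr
        exact card_shell_le hδ hm hlower hupper hsep
    _ = 124 / δ ^ s * (1 / (m : ℝ) ^ (s - 2)) := by
        rw [mul_pow, ← pow_mul_pow_sub (m : ℝ) hs]
        field_simp

lemma sum_one_div_norm_pow_le (hδ : 0 < δ) (hlower : ∀ i ∈ S, δ ≤ ‖u i‖)
    (hsep : ∀ i ∈ S, ∀ j ∈ S, i ≠ j → δ ≤ ‖u i - u j‖) {s : ℕ} (hs : 4 ≤ s) :
    ∑ i ∈ S, 1 / ‖u i‖ ^ s ≤ 124 * zetaNat (s - 2) / δ ^ s := by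
  set shell : ι → ℕ := fun i => ⌊‖u i‖ / δ⌋₊ - 1 with hshell
  have shell_bounds : ∀ i ∈ S, ∀ n, shell i = n →
      ((n + 1 : ℕ) : ℝ) * δ ≤ ‖u i‖ ∧ ‖u i‖ ≤ (((n + 1 : ℕ) : ℝ) + 1) * δ := by
    intro i hi n hn
    have hfloor : 1 ≤ ⌊‖u i‖ / δ⌋₊ :=
      Nat.le_floor (by rw [Nat.cast_one, le_div_iff₀ hδ, one_mul]; exact hlower i hi)
    rw [show n + 1 = ⌊‖u i‖ / δ⌋₊ by simp only [hshell] at hn; omega]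
    exact ⟨(le_div_iff₀ hδ).1 (Nat.floor_le (by positivity)),
      (div_le_iff₀ hδ).1 (Nat.lt_floor_add_one _).le⟩
  calc ∑ i ∈ S, 1 / ‖u i‖ ^ s
      = ∑ n ∈ S.image shell, ∑ i ∈ S with shell i = n, 1 / ‖u i‖ ^ s :=
        (sum_fiberwise_of_maps_to (fun i hi => mem_image_of_mem shell hi) _).symm
    _ ≤ ∑ n ∈ S.image shell, 124 / δ ^ s * (1 / ((n : ℝ) + 1) ^ (s - 2)) :=
        sum_le_sum fun n _ => by
          rw [← Nat.cast_add_one]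
          have mem := fun i (hi : i ∈ S.filter fun i => shell i = n) => mem_filter.1 hi
          exact sum_shell_one_div_norm_pow_le hδ (Nat.le_add_left 1 n) (by omega)
            (fun i hi => (shell_bounds i (mem i hi).1 n (mem i hi).2).1)
            (fun i hi => (shell_bounds i (mem i hi).1 n (mem i hi).2).2)
            fun i hi j hj => hsep i (mem i hi).1 j (mem j hj).1
    _ ≤ 124 / δ ^ s * zetaNat (s - 2) := by
        rw [← mul_sum]
        gcongr
        exact (summable_one_div_add_one_pow (by omega)).sum_le_tsum _ fun n _ => by positivity
    _ = 124 * zetaNat (s - 2) / δ ^ s := by ring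

lemma sum_one_div_rotAngle_pow_le {z : ι → Mat3} (hz : ∀ i ∈ S, IsSO3 (z i)) (hδ : 0 < δ)
    (hlower : ∀ i ∈ S, δ ≤ rotAngle (z i))
    (hsep : ∀ i ∈ S, ∀ j ∈ S, i ≠ j → δ ≤ rotAngle (z i * (z j).transpose))
    {s : ℕ} (hs : 4 ≤ s) :
    ∑ i ∈ S, 1 / rotAngle (z i) ^ s ≤ 124 * zetaNat (s - 2) / δ ^ s := by
  obtain ⟨u, norm_u, rotAngle_le⟩ := exists_expanding_log_chart
  calc ∑ i ∈ S, 1 / rotAngle (z i) ^ s = ∑ i ∈ S, 1 / ‖u (z i)‖ ^ s :=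
        sum_congr rfl fun i hi => by rw [norm_u _ (hz i hi)]
    _ ≤ 124 * zetaNat (s - 2) / δ ^ s :=
        sum_one_div_norm_pow_le hδ (fun i hi => by rw [norm_u _ (hz i hi)]; exact hlower i hi)
          (fun i hi j hj hij => (hsep i hi j hj hij).trans (rotAngle_le _ _ (hz i hi) (hz j hj)))
          hs

end Packing

section LieDerivatives

open Polynomial NormedSpace
open scoped Matrix

section ExpCurve

variable {n : Type*} [Fintype n] [DecidableEq n]

attribute [local instance] Matrix.linftyOpNormedRing Matrix.linftyOpNormedAlgebra

lemma hasDerivAt_trace_mul_exp_smul (z L : Matrix n n ℝ) :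
    HasDerivAt (fun t : ℝ => (z * exp (t • L)).trace) (z * L).trace 0 := by
  have hexp := hasDerivAt_exp_smul_const (𝕂 := ℝ) L (0 : ℝ)
  rw [zero_smul, exp_zero, one_mul] at hexp
  let φ := Matrix.traceLinearMap n ℝ ℝ ∘ₗ LinearMap.mulLeft ℝ z
  exact (LinearMap.toContinuousLinearMap φ).hasFDerivAt.comp_hasDerivAt (0 : ℝ) hexp

lemma exp_transpose_mul_exp {L : Matrix n n ℝ} (hL : Lᵀ = -L) : (exp L)ᵀ * exp L = 1 := by
  rw [← Matrix.exp_transpose, hL,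
    ← Matrix.exp_add_of_commute _ _ (Commute.neg_left (Commute.refl L)), neg_add_cancel, exp_zero]

lemma det_exp_of_skew {L : Matrix n n ℝ} (hL : Lᵀ = -L) : (exp L).det = 1 := by
  let H := (1 / 2 : ℝ) • L
  have hH : Hᵀ = -H := by rw [Matrix.transpose_smul, hL, smul_neg]
  have hdouble : exp L = exp H * exp H := by
    rw [← Matrix.exp_add_of_commute H H (Commute.refl H), ← add_smul, add_halves, one_smul]
  have hdet := congrArg Matrix.det (exp_transpose_mul_exp hH)
  rwa [Matrix.det_mul, Matrix.det_transpose, Matrix.det_one, ← Matrix.det_mul, ← hdouble] at hdet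

end ExpCurve

lemma Lgen_transpose (i : Fin 3) : (Lgen i)ᵀ = -Lgen i := by
  fin_cases i <;> ext a b <;> fin_cases a <;> fin_cases b <;> simp [Lgen]

lemma isSO3_exp_smul_Lgen (i : Fin 3) (t : ℝ) : IsSO3 (exp (t • Lgen i)) := by
  have hskew : (t • Lgen i)ᵀ = -(t • Lgen i) := by
    rw [Matrix.transpose_smul, Lgen_transpose, smul_neg]
  exact ⟨exp_transpose_mul_exp hskew, det_exp_of_skew hskew⟩

lemma hasDerivAt_eval_cosAngle_mul_exp_smul (P : ℝ[X]) (z L : Mat3) :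
    HasDerivAt (fun t : ℝ => P.eval (cosAngle (z * exp (t • L))))
      (P.derivative.eval (cosAngle z) * ((z * L).trace / 2)) 0 := by
  have hcos : HasDerivAt (fun t : ℝ => cosAngle (z * exp (t • L))) ((z * L).trace / 2) 0 :=
    ((hasDerivAt_trace_mul_exp_smul z L).sub_const 1).div_const 2
  have hP := P.hasDerivAt (cosAngle (z * exp ((0 : ℝ) • L)))
  rw [zero_smul, exp_zero, mul_one] at hP
  exact hP.comp_of_eq (0 : ℝ) hcos (by rw [zero_smul, exp_zero, mul_one])

variable {s N : ℕ} {x y : Mat3}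

lemma sigmaK_eq (hs : 2 ≤ s) (hev : Even s) (hx : IsSO3 x) (hy : IsSO3 y) :
    sigmaK s N x y = (kernelPoly s N).eval (cosAngle (y⁻¹ * x)) := by
  rw [sigmaK, sigmaT_eq_eval hs hev, (hy.inv_mul hx).cos_rotAngle]

lemma Xx_sigmaK (hs : 2 ≤ s) (hev : Even s) (hx : IsSO3 x) (hy : IsSO3 y) (j : Fin 3) :
    Xx j (sigmaK s N) x y =
      (kernelPoly s N).derivative.eval (cosAngle (y⁻¹ * x)) * ((y⁻¹ * x * Lgen j).trace / 2) := by
  rw [← (hasDerivAt_eval_cosAngle_mul_exp_smul _ (y⁻¹ * x) (Lgen j)).deriv, Xx]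
  congr 1
  funext t
  rw [sigmaK_eq hs hev (hx.mul (isSO3_exp_smul_Lgen j t)) hy, mul_assoc]

lemma Xy_sigmaK (hs : 2 ≤ s) (hev : Even s) (hx : IsSO3 x) (hy : IsSO3 y) (i : Fin 3) :
    Xy i (sigmaK s N) x y =
      (kernelPoly s N).derivative.eval (cosAngle (y⁻¹ * x)) *
        (((Lgen i)ᵀ * (y⁻¹ * x)).trace / 2) := by
  have trace_flip : ∀ E : Mat3, (Eᵀ * (yᵀ * x)).trace = (xᵀ * y * E).trace := fun E => by
    rw [← Matrix.trace_transpose, Matrix.transpose_mul, Matrix.transpose_mul,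
      Matrix.transpose_transpose, Matrix.transpose_transpose]
  have cosAngle_flip : cosAngle (yᵀ * x) = cosAngle (xᵀ * y) := by
    rw [cosAngle, cosAngle, ← one_mul (yᵀ * x), ← Matrix.transpose_one, trace_flip, mul_one]
  rw [hy.inv_eq, trace_flip, cosAngle_flip,
    ← (hasDerivAt_eval_cosAngle_mul_exp_smul _ (xᵀ * y) (Lgen i)).deriv, Xy]
  congr 1
  funext t
  have hyt := hy.mul (isSO3_exp_smul_Lgen i t)
  rw [sigmaK_eq hs hev hx hyt, hyt.inv_eq, cosAngle, cosAngle, ← trace_flip,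
    Matrix.transpose_mul, mul_assoc]

/-- The `(i, j)` entry of minus the Hessian, in the left-invariant frame `Lgen`, of a class function
on SO(3) whose first two derivatives with respect to `cosAngle z` are `P₁` and `P₂`; the sign comes
from differentiating once in each variable of a zonal kernel. -/
noncomputable def hessianEntry (P₁ P₂ : ℝ) (z : Mat3) (i j : Fin 3) : ℝ :=
  P₂ * ((z * Lgen j).trace / 2) * (((Lgen i)ᵀ * z).trace / 2) +
    P₁ * (((Lgen i)ᵀ * z * Lgen j).trace / 2)

lemma Xx_Xy_sigmaK (hs : 2 ≤ s) (hev : Even s) (hx : IsSO3 x) (hy : IsSO3 y) (i j : Fin 3) :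
    Xx j (Xy i (sigmaK s N)) x y =
      hessianEntry ((kernelPoly s N).derivative.eval (cosAngle (y⁻¹ * x)))
        ((kernelPoly s N).derivative.derivative.eval (cosAngle (y⁻¹ * x))) (y⁻¹ * x) i j := by
  have hprod := (hasDerivAt_eval_cosAngle_mul_exp_smul (kernelPoly s N).derivative (y⁻¹ * x)
    (Lgen j)).mul
    ((hasDerivAt_trace_mul_exp_smul ((Lgen i)ᵀ * (y⁻¹ * x)) (Lgen j)).div_const 2)
  rw [zero_smul, exp_zero, mul_one, mul_one] at hprod
  rw [hessianEntry, ← hprod.deriv, Xx]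
  congr 1
  funext t
  rw [Xy_sigmaK hs hev (hx.mul (isSO3_exp_smul_Lgen j t)) hy, Pi.mul_apply]
  simp only [mul_assoc]

end LieDerivatives

section ClassFunctions

open scoped Matrix

lemma one_add_cos_mul_le_two_mul_sin {ω : ℝ} (h0 : 0 ≤ ω) (hπ : ω ≤ π) :
    (1 + Real.cos ω) * ω ≤ 2 * Real.sin ω := by
  obtain ⟨A, rfl⟩ : ∃ A, ω = 2 * A := ⟨ω / 2, by ring⟩
  have hcos : 0 ≤ Real.cos A := Real.cos_nonneg_of_neg_pi_div_two_le_of_le (by linarith)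
    (by linarith)
  have hA : A * Real.cos A ≤ Real.sin A := by
    rcases hcos.eq_or_lt with h | h
    · rw [← h, mul_zero]
      exact Real.sin_nonneg_of_nonneg_of_le_pi (by linarith) (by linarith)
    · have hlt : A < π / 2 := (by linarith : A ≤ π / 2).lt_of_ne fun h' => by simp [h'] at h
      have htan := Real.le_tan (by linarith) hlt
      rwa [Real.tan_eq_sin_div_cos, le_div_iff₀ h] at htan
  rw [Real.cos_two_mul, Real.sin_two_mul]
  nlinarith

lemma abs_mul_one_add_cos_le {P ω B : ℝ} (h0 : 0 < ω) (hπ : ω ≤ π)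
    (hP : 2 * |P * Real.sin ω| ≤ B * ω) : |P * (1 + Real.cos ω)| ≤ B := by
  refine le_of_mul_le_mul_right ?_ h0
  have hcos : 0 ≤ 1 + Real.cos ω := by linarith [Real.neg_one_le_cos ω]
  calc |P * (1 + Real.cos ω)| * ω = |P| * ((1 + Real.cos ω) * ω) := by
        rw [abs_mul, abs_of_nonneg hcos, mul_assoc]
    _ ≤ |P| * (2 * |Real.sin ω|) :=
        mul_le_mul_of_nonneg_left ((one_add_cos_mul_le_two_mul_sin h0.le hπ).trans
          (mul_le_mul_of_nonneg_left (le_abs_self _) zero_le_two)) (abs_nonneg P)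
    _ = 2 * |P * Real.sin ω| := by rw [abs_mul, mul_left_comm]
    _ ≤ B * ω := hP

lemma trace_quatMat_mul_Lgen (q : Fin 4 → ℝ) (j : Fin 3) :
    (quatMat q * Lgen j).trace / 2 = -(2 * q 0 * q j.succ) := by
  fin_cases j <;>
    simp only [Matrix.trace_fin_three, Matrix.mul_apply, Fin.sum_univ_three, quatMat, Lgen,
      Matrix.of_apply, Matrix.cons_val, Fin.reduceFinMk, Fin.zero_eta, Fin.mk_one, Fin.reduceSucc,
      Fin.succ_zero_eq_one, Fin.succ_one_eq_two, Fin.isValue] <;> ring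

lemma trace_Lgen_transpose_mul (z : Mat3) (i : Fin 3) :
    ((Lgen i)ᵀ * z).trace / 2 = -((z * Lgen i).trace / 2) := by
  rw [Lgen_transpose, neg_mul, Matrix.trace_neg, Matrix.trace_mul_comm, neg_div]

lemma trace_Lgen_transpose_mul_quatMat_mul_Lgen (q : Fin 4 → ℝ) (i j : Fin 3) :
    ((Lgen i)ᵀ * quatMat q * Lgen j).trace / 2 =
      (if i = j then q 0 ^ 2 else 0) - q i.succ * q j.succ -
        q 0 * ∑ k, eps3 i j k * q k.succ := by
  fin_cases i <;> fin_cases j <;>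
    simp only [Matrix.trace_fin_three, Matrix.mul_apply, Matrix.transpose_apply,
      Fin.sum_univ_three, quatMat, Lgen, eps3, Prod.mk.injEq, Matrix.of_apply, Matrix.cons_val,
      Fin.reduceFinMk, Fin.zero_eta, Fin.mk_one, Fin.reduceSucc, Fin.succ_zero_eq_one,
      Fin.succ_one_eq_two, Fin.isValue, Fin.reduceEq, and_false, or_false, false_or, false_and,
      true_and, and_self, if_true, if_false] <;>
    ring

lemma sq_sum_eps3_mul_le (v : Fin 3 → ℝ) (i j : Fin 3) :
    (∑ k, eps3 i j k * v k) ^ 2 ≤ ∑ k, v k ^ 2 := by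
  simp only [Fin.sum_univ_three]
  fin_cases i <;> fin_cases j <;>
    simp only [eps3, Prod.mk.injEq, Fin.reduceFinMk, Fin.zero_eta, Fin.mk_one, Fin.isValue,
      Fin.reduceEq, and_true, and_false, or_false, false_or, and_self, if_true, if_false] <;>
    linarith [sq_nonneg (v 0), sq_nonneg (v 1), sq_nonneg (v 2)]

lemma two_mul_abs_mul_le_sum_sq {ι : Type*} [Fintype ι] (v : ι → ℝ) {i j : ι} (hij : i ≠ j) :
    2 * |v i * v j| ≤ ∑ k, v k ^ 2 := by
  classical
  calc 2 * |v i * v j| ≤ v i ^ 2 + v j ^ 2 := by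
        rw [abs_mul, ← sq_abs (v i), ← sq_abs (v j), ← mul_assoc]
        exact two_mul_le_add_sq _ _
    _ = ∑ k ∈ {i, j}, v k ^ 2 := (Finset.sum_pair (f := fun k => v k ^ 2) hij).symm
    _ ≤ ∑ k, v k ^ 2 :=
        Finset.sum_le_univ_sum_of_nonneg fun k => sq_nonneg (v k)

lemma rotAngle_le_pi (z : Mat3) : rotAngle z ≤ π := Real.arccos_le_pi _

variable {z : Mat3}

lemma abs_trace_mul_Lgen_le (hz : IsSO3 z) (i : Fin 3) :
    |(z * Lgen i).trace / 2| ≤ Real.sin (rotAngle z) := by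
  obtain ⟨q, h0, hq, rfl⟩ := hz.exists_quatMat
  have hsq : q i.succ ^ 2 ≤ Real.sin (Real.arccos (q 0)) ^ 2 := by
    rw [sin_arccos_sq hq]
    exact Finset.single_le_sum (f := fun k : Fin 3 => q k.succ ^ 2) (fun _ _ => sq_nonneg _)
      (Finset.mem_univ i)
  have hsin : 0 ≤ Real.sin (Real.arccos (q 0)) :=
    Real.sin_nonneg_of_nonneg_of_le_pi (Real.arccos_nonneg _) (Real.arccos_le_pi _)
  rw [trace_quatMat_mul_Lgen, rotAngle_quatMat hq h0, Real.sin_two_mul,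
    Real.cos_arccos (by linarith) (by nlinarith [sq_zero_le_one hq]), abs_neg, abs_mul,
    abs_of_nonneg (by positivity : 0 ≤ 2 * q 0)]
  nlinarith [abs_le_of_sq_le_sq hsq hsin]

lemma hessianEntry_quatMat_mul_sq (P₁ P₂ S : ℝ) {q : Fin 4 → ℝ} (hS : q 0 ^ 2 + S ^ 2 = 1)
    (i j : Fin 3) :
    hessianEntry P₁ P₂ (quatMat q) i j * S ^ 2 =
      q i.succ * q j.succ * (P₁ * (2 * q 0 ^ 2 - 1) - P₂ * (2 * q 0 * S) ^ 2) +
        ((if i = j then S ^ 2 else 0) - q i.succ * q j.succ) * (P₁ * q 0 ^ 2) -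
        P₁ * q 0 * (∑ k, eps3 i j k * q k.succ) * S ^ 2 := by
  rw [hessianEntry, trace_quatMat_mul_Lgen, trace_Lgen_transpose_mul, trace_quatMat_mul_Lgen,
    trace_Lgen_transpose_mul_quatMat_mul_Lgen]
  split_ifs <;> linear_combination (-P₁ * q i.succ * q j.succ) * hS

lemma eps3_self (i k : Fin 3) : eps3 i i k = 0 := by
  fin_cases i <;> fin_cases k <;> simp [eps3]

lemma abs_mul_add_sub_mul_le {w W D E B : ℝ} (hw : 0 ≤ w) (hW : w ≤ W) (hD : |D| ≤ B)
    (hE : |E| ≤ B) : |w * D + (W - w) * E| ≤ B * W :=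
  calc |w * D + (W - w) * E| ≤ w * |D| + (W - w) * |E| := by
        refine (abs_add_le _ _).trans_eq ?_
        rw [abs_mul, abs_mul, abs_of_nonneg hw, abs_of_nonneg (sub_nonneg.2 hW)]
    _ ≤ w * B + (W - w) * B := by gcongr
    _ = B * W := by ring

lemma abs_hessianEntry_quatMat_le {P₁ P₂ S B : ℝ} {q : Fin 4 → ℝ} (hS : 0 < S)
    (hq : q 0 ^ 2 + S ^ 2 = 1) (hsum : ∑ k : Fin 3, q k.succ ^ 2 = S ^ 2)
    (hradial : |P₁ * (2 * q 0 ^ 2 - 1) - P₂ * (2 * q 0 * S) ^ 2| ≤ B)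
    (hcos : |P₁ * q 0 ^ 2| ≤ B / 2) (hsin : |P₁ * q 0| * S ≤ B / 4) (i j : Fin 3) :
    |hessianEntry P₁ P₂ (quatMat q) i j| ≤ B := by
  have hS2 : 0 < S ^ 2 := by positivity
  refine le_of_mul_le_mul_right ?_ hS2
  rw [← abs_of_pos hS2, ← abs_mul, abs_of_pos hS2, hessianEntry_quatMat_mul_sq _ _ _ hq]
  set D := P₁ * (2 * q 0 ^ 2 - 1) - P₂ * (2 * q 0 * S) ^ 2
  set E := P₁ * q 0 ^ 2
  have hB : 0 ≤ B := (abs_nonneg _).trans hradial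
  split_ifs with hij
  · subst hij
    have hle : q i.succ ^ 2 ≤ S ^ 2 := hsum ▸ Finset.single_le_sum
      (f := fun k : Fin 3 => q k.succ ^ 2) (fun _ _ => sq_nonneg _) (Finset.mem_univ i)
    simp only [eps3_self, zero_mul, Finset.sum_const_zero, mul_zero, sub_zero, ← sq]
    exact abs_mul_add_sub_mul_le (sq_nonneg _) hle hradial (by linarith)
  · set r := ∑ k, eps3 i j k * q k.succ
    have hr : |r| ≤ S := abs_le_of_sq_le_sq
      (hsum ▸ sq_sum_eps3_mul_le (fun k => q k.succ) i j) hS.le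
    have hprod : 2 * |q i.succ * q j.succ| ≤ S ^ 2 :=
      hsum ▸ two_mul_abs_mul_le_sum_sq (fun k : Fin 3 => q k.succ) hij
    calc |q i.succ * q j.succ * D + (0 - q i.succ * q j.succ) * E - P₁ * q 0 * r * S ^ 2|
        = |q i.succ * q j.succ * (D - E) - P₁ * q 0 * r * S ^ 2| := by ring_nf
      _ ≤ |q i.succ * q j.succ| * (|D| + |E|) + |P₁ * q 0| * |r| * S ^ 2 := by
          refine (abs_sub _ _).trans ?_
          rw [abs_mul, abs_mul _ (S ^ 2), abs_mul _ r, abs_of_pos hS2]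
          gcongr
          exact abs_sub _ _
      _ ≤ S ^ 2 / 2 * (B + B / 2) + B / 4 * S ^ 2 := by
          gcongr
          · linarith
          · exact (mul_le_mul_of_nonneg_left hr (abs_nonneg _)).trans hsin
      _ = B * S ^ 2 := by ring

lemma abs_hessianEntry_le {P₁ P₂ B₁ B₂ : ℝ} (hz : IsSO3 z) (hω : 0 < rotAngle z)
    (hgrad : |P₁ * Real.sin (rotAngle z)| ≤ B₁)
    (hradial : |P₁ * Real.cos (rotAngle z) - P₂ * Real.sin (rotAngle z) ^ 2| ≤ B₂)
    (hB : 2 * B₁ ≤ B₂) (hBω : 2 * B₁ ≤ B₂ * rotAngle z) (i j : Fin 3) :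
    |hessianEntry P₁ P₂ z i j| ≤ B₂ := by
  have hcos := abs_mul_one_add_cos_le hω (rotAngle_le_pi z)
    ((mul_le_mul_of_nonneg_left hgrad zero_le_two).trans hBω)
  obtain ⟨q, h0, hq, rfl⟩ := hz.exists_quatMat
  have hcosA : Real.cos (Real.arccos (q 0)) = q 0 :=
    Real.cos_arccos (by linarith) (by nlinarith [sq_zero_le_one hq])
  rw [rotAngle_quatMat hq h0] at hω hgrad hradial hcos
  rw [Real.cos_two_mul, hcosA] at hradial hcos
  rw [Real.sin_two_mul, hcosA, mul_right_comm] at hgrad hradial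
  have hS := sin_arccos_pos h0 (by linarith)
  have hsq := Real.sin_sq_add_cos_sq (Real.arccos (q 0))
  rw [hcosA] at hsq
  refine abs_hessianEntry_quatMat_le hS (by linarith) (sin_arccos_sq hq).symm hradial ?_ ?_ i j
  · rw [show P₁ * (1 + (2 * q 0 ^ 2 - 1)) = 2 * (P₁ * q 0 ^ 2) by ring, abs_mul, abs_two] at hcos
    linarith
  · rw [show P₁ * (2 * q 0 * Real.sin (Real.arccos (q 0))) =
      2 * (P₁ * q 0 * Real.sin (Real.arccos (q 0))) by ring, abs_mul, abs_two, abs_mul,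
      abs_of_pos hS] at hgrad
    linarith

end ClassFunctions

section Entries

open Polynomial
open scoped Matrix

variable {s N : ℕ} {x y : Mat3}

/-- The weights of the function block and of the derivative blocks which balance the sizes of the
entries of the interpolation matrix. -/
noncomputable def blockWeight (N : ℕ) (p : Fin 4) : ℝ := if p = 0 then 1 / 2 else N + 1

lemma blockWeight_pos (N : ℕ) (p : Fin 4) : 0 < blockWeight N p := by
  unfold blockWeight
  split_ifs <;> positivity

lemma abs_sigmaK_le (hs : 6 ≤ s) (hev : Even s) (hN : 2 * s ≤ N)
    (hω : 2 * s / 3 ≤ (N + 1) * rotAngle (y⁻¹ * x)) :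
    |sigmaK s N x y| ≤ (s + 1 / 4) * decay s N (rotAngle (y⁻¹ * x)) := by
  rw [sigmaK, sigmaT_eq_eval (by omega) hev]
  exact (kernelPoly_bounds hs hev hN (rotAngle_le_pi _) hω).1

lemma abs_derivative_mul_trace_le (hs : 6 ≤ s) (hev : Even s) (hN : 2 * s ≤ N)
    (hx : IsSO3 x) (hy : IsSO3 y) (hω : 2 * s / 3 ≤ (N + 1) * rotAngle (y⁻¹ * x)) (i : Fin 3) :
    |(kernelPoly s N).derivative.eval (cosAngle (y⁻¹ * x)) * ((y⁻¹ * x * Lgen i).trace / 2)| ≤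
      (N + 1) * ((2 * s + 1 / 2) * decay s N (rotAngle (y⁻¹ * x))) := by
  refine le_trans ?_ (kernelPoly_bounds hs hev hN (rotAngle_le_pi _) hω).2.1
  rw [(hy.inv_mul hx).cos_rotAngle, abs_mul, abs_mul]
  exact mul_le_mul_of_nonneg_left
    ((abs_trace_mul_Lgen_le (hy.inv_mul hx) i).trans (le_abs_self _)) (abs_nonneg _)

lemma abs_Xx_sigmaK_le (hs : 6 ≤ s) (hev : Even s) (hN : 2 * s ≤ N)
    (hx : IsSO3 x) (hy : IsSO3 y) (hω : 2 * s / 3 ≤ (N + 1) * rotAngle (y⁻¹ * x)) (j : Fin 3) :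
    |Xx j (sigmaK s N) x y| ≤
      (N + 1) * ((2 * s + 1 / 2) * decay s N (rotAngle (y⁻¹ * x))) := by
  rw [Xx_sigmaK (by omega) hev hx hy]
  exact abs_derivative_mul_trace_le hs hev hN hx hy hω j

lemma abs_Xy_sigmaK_le (hs : 6 ≤ s) (hev : Even s) (hN : 2 * s ≤ N)
    (hx : IsSO3 x) (hy : IsSO3 y) (hω : 2 * s / 3 ≤ (N + 1) * rotAngle (y⁻¹ * x)) (i : Fin 3) :
    |Xy i (sigmaK s N) x y| ≤
      (N + 1) * ((2 * s + 1 / 2) * decay s N (rotAngle (y⁻¹ * x))) := by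
  rw [Xy_sigmaK (by omega) hev hx hy, trace_Lgen_transpose_mul, mul_neg, abs_neg]
  exact abs_derivative_mul_trace_le hs hev hN hx hy hω i

lemma abs_Xx_Xy_sigmaK_le (hs : 6 ≤ s) (hev : Even s) (hN : 2 * s ≤ N)
    (hx : IsSO3 x) (hy : IsSO3 y) (hω : 2 * s / 3 ≤ (N + 1) * rotAngle (y⁻¹ * x)) (i j : Fin 3) :
    |Xx j (Xy i (sigmaK s N)) x y| ≤
      (N + 1) ^ 2 * ((4 * s + 1) * decay s N (rotAngle (y⁻¹ * x))) := by
  obtain ⟨-, hgrad, hradial⟩ := kernelPoly_bounds hs hev hN (rotAngle_le_pi _) hω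
  have hz := hy.inv_mul hx
  rw [Xx_Xy_sigmaK (by omega) hev hx hy, ← hz.cos_rotAngle]
  have hd := decay_nonneg hev N (rotAngle (y⁻¹ * x))
  set ω := rotAngle (y⁻¹ * x)
  set d := decay s N ω
  have hs' : (6 : ℝ) ≤ s := by exact_mod_cast hs
  have hN1 : (1 : ℝ) ≤ N + 1 := by linarith [(Nat.cast_nonneg N : (0 : ℝ) ≤ N)]
  have hω0 : 0 < ω := pos_of_mul_pos_right (by linarith : 0 < ((N : ℝ) + 1) * ω) (by linarith)
  refine abs_hessianEntry_le hz hω0 hgrad hradial ?_ ?_ i j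
  · calc 2 * ((N + 1) * ((2 * s + 1 / 2) * d))
        ≤ 2 * ((N + 1) * ((2 * s + 1 / 2) * d)) * (N + 1) :=
          le_mul_of_one_le_right (by positivity) hN1
      _ = (N + 1) ^ 2 * ((4 * s + 1) * d) := by ring
  · calc 2 * ((N + 1) * ((2 * s + 1 / 2) * d))
        ≤ 2 * ((N + 1) * ((2 * s + 1 / 2) * d)) * ((N + 1) * ω) :=
          le_mul_of_one_le_right (by positivity) (by linarith)
      _ = (N + 1) ^ 2 * ((4 * s + 1) * d) * ω := by ring

lemma abs_Kblock_le (hs : 6 ≤ s) (hev : Even s) (hN : 2 * s ≤ N)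
    (hx : IsSO3 x) (hy : IsSO3 y) (hω : 2 * s / 3 ≤ (N + 1) * rotAngle (y⁻¹ * x)) (p q : Fin 4) :
    |Kblock s N p q x y| ≤
      blockWeight N p * blockWeight N q * ((4 * s + 1) * decay s N (rotAngle (y⁻¹ * x))) := by
  have hfun := abs_sigmaK_le hs hev hN hω
  have hleft := abs_Xx_sigmaK_le hs hev hN hx hy hω
  have hright := abs_Xy_sigmaK_le hs hev hN hx hy hω
  have hmixed := abs_Xx_Xy_sigmaK_le hs hev hN hx hy hω
  have toOp_succ : ∀ i : Fin 3, toOp i.succ = some i := fun i => by fin_cases i <;> rfl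
  have toOp_zero : toOp 0 = none := rfl
  cases p using Fin.cases <;> cases q using Fin.cases <;>
    simp only [Kblock, toOp_zero, toOp_succ, blockWeight, if_true, Fin.succ_ne_zero, if_false]
  case zero.zero => linarith
  case zero.succ j => linarith [hleft j]
  case succ.zero i => linarith [hright i]
  case succ.succ i j => linarith [hmixed i j]

lemma trace_Lgen (i : Fin 3) : (Lgen i).trace = 0 := by
  fin_cases i <;> simp [Matrix.trace_fin_three, Lgen]

lemma trace_Lgen_transpose_mul_Lgen (i j : Fin 3) :
    ((Lgen i)ᵀ * Lgen j).trace / 2 = if i = j then 1 else 0 := by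
  fin_cases i <;> fin_cases j <;>
    simp [Matrix.trace_fin_three, Lgen, Matrix.mul_apply, Fin.sum_univ_three]

lemma cosAngle_one : cosAngle 1 = 1 := by
  rw [cosAngle, Matrix.trace_one]
  norm_num

/-- The diagonal entries of the interpolation matrix in block row `p`. -/
noncomputable def diagEntry (s N : ℕ) (p : Fin 4) : ℝ :=
  if p = 0 then 1 else (kernelPoly s N).derivative.eval 1

lemma Kblock_self (hs : 6 ≤ s) (hev : Even s) (hN : 2 * s ≤ N) (hx : IsSO3 x) (p q : Fin 4) :
    Kblock s N p q x x = if p = q then diagEntry s N p else 0 := by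
  have hs2 : 2 ≤ s := by omega
  have inv_mul_self : x⁻¹ * x = 1 := by rw [hx.inv_eq, hx.1]
  have hfun := sigmaK_eq (N := N) hs2 hev hx hx
  have hleft := Xx_sigmaK (N := N) hs2 hev hx hx
  have hright := Xy_sigmaK (N := N) hs2 hev hx hx
  have hmixed := Xx_Xy_sigmaK (N := N) hs2 hev hx hx
  simp only [hessianEntry, inv_mul_self, cosAngle_one, mul_one, one_mul, Matrix.trace_transpose,
    trace_Lgen, trace_Lgen_transpose_mul_Lgen, kernelPoly_eval_one hs hev hN]
    at hfun hleft hright hmixed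
  fin_cases p <;> fin_cases q <;> simp [Kblock, toOp, diagEntry, hfun, hleft, hright, hmixed]

end Entries

section Dominance

open Finset

variable {s N M : ℕ} {x : Fin M → Mat3} {ε : ℝ}

lemma one_le_zetaNat {m : ℕ} (hm : 2 ≤ m) : 1 ≤ zetaNat m := by
  simpa [zetaNat] using (summable_one_div_add_one_pow hm).le_tsum 0 fun n _ => by positivity

lemma div_three_pow_le_factorial (n : ℕ) : ((n : ℝ) / 3) ^ n ≤ n.factorial := by
  have hexp : Real.exp n ≤ 3 ^ n := by
    rw [← Real.exp_one_pow]
    gcongr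
    linarith [Real.exp_one_lt_d9]
  have h := (Real.pow_div_factorial_le_exp n n.cast_nonneg n).trans hexp
  rw [div_le_iff₀ (by positivity)] at h
  rwa [div_pow, div_le_iff₀' (by positivity)]

lemma two_pow_mul_factorial_le_CConst (hs : 4 ≤ s) : 2 ^ s * (s.factorial : ℝ) ≤ CConst 2 s := by
  have hfact : (s.factorial : ℝ) = s * (s - 1).factorial := by
    exact_mod_cast (Nat.mul_factorial_pred (by omega)).symm
  have hc : 2 ^ s * (s.factorial : ℝ) ≤ 124 * cConst 2 s := by
    calc 2 ^ s * (s.factorial : ℝ) = (s - 1).factorial * 2 ^ s * s := by rw [hfact]; ring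
      _ ≤ (s - 1).factorial * 2 ^ s * (124 * (1.02 * (4 * s + 1))) := by
          gcongr
          linarith [(Nat.cast_nonneg s : (0 : ℝ) ≤ s)]
      _ = 124 * cConst 2 s := by rw [cConst]; ring
  exact hc.trans (le_mul_of_one_le_right (le_trans (by positivity) hc)
    (one_le_zetaNat (by omega)))

lemma CConst_pos (hs : 4 ≤ s) : 0 < CConst 2 s :=
  lt_of_lt_of_le (by positivity) (two_pow_mul_factorial_le_CConst hs)

lemma two_mul_div_three_le {ν : ℝ} (hs : 4 ≤ s) (hν : 0 ≤ ν) (h : CConst 2 s ≤ ν ^ s) :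
    2 * (s : ℝ) / 3 ≤ ν := by
  refine le_of_pow_le_pow_left₀ (by omega : s ≠ 0) hν ?_
  calc (2 * (s : ℝ) / 3) ^ s = 2 ^ s * (s / 3) ^ s := by rw [← mul_pow, mul_div_assoc]
    _ ≤ 2 ^ s * s.factorial := by gcongr; exact div_three_pow_le_factorial s
    _ ≤ ν ^ s := (two_pow_mul_factorial_le_CConst hs).trans h

lemma sum_decay_le {ν : ℝ} (hs : 4 ≤ s) (hν : 0 < ν) (hx : ∀ a, IsSO3 (x a))
    (hsep : ∀ a b, a ≠ b → ν / ((N : ℝ) + 1) ≤ rotAngle ((x b)⁻¹ * x a)) (i : Fin M) :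
    ∑ k ∈ univ.erase i, (4 * s + 1) * decay s N (rotAngle ((x k)⁻¹ * x i)) ≤
      CConst 2 s / ν ^ s := by
  have relative (k l : Fin M) :
      (x k)⁻¹ * x i * ((x l)⁻¹ * x i).transpose = (x k)⁻¹ * x l := by
    rw [(hx l).inv_eq, Matrix.transpose_mul, Matrix.transpose_transpose, mul_assoc,
      ← mul_assoc (x i), (hx i).mul_transpose, one_mul]
  have hsum := sum_one_div_rotAngle_pow_le (S := univ.erase i) (z := fun k => (x k)⁻¹ * x i)
    (fun k _ => (hx k).inv_mul (hx i)) (by positivity : 0 < ν / ((N : ℝ) + 1))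
    (fun k hk => hsep i k (ne_of_mem_erase hk).symm)
    (fun k _ l _ hkl => by rw [relative]; exact hsep l k hkl.symm) hs
  have hcConst : 0 ≤ cConst 2 s / ((N : ℝ) + 1) ^ s := by rw [cConst]; positivity
  calc ∑ k ∈ univ.erase i, (4 * s + 1) * decay s N (rotAngle ((x k)⁻¹ * x i))
      = cConst 2 s / ((N : ℝ) + 1) ^ s *
          ∑ k ∈ univ.erase i, 1 / rotAngle ((x k)⁻¹ * x i) ^ s := by
        rw [mul_sum]
        refine sum_congr rfl fun k _ => ?_
        rw [decay, cConst, mul_pow, div_mul_div_comm, mul_one, mul_div_assoc', mul_comm (4 * _ + _)]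
    _ ≤ cConst 2 s / ((N : ℝ) + 1) ^ s * (124 * zetaNat (s - 2) / (ν / (N + 1)) ^ s) := by
        gcongr
    _ = CConst 2 s / ν ^ s := by
        rw [CConst, div_pow]
        field_simp

/-- The nodes are rotations, far enough apart for the kernel decay estimates to apply to every pair,
and the total decay seen from each node is at most `ε`. -/
structure IsWellSeparated (s N : ℕ) (x : Fin M → Mat3) (ε : ℝ) : Prop where
  isSO3 : ∀ a, IsSO3 (x a)
  le_rotAngle : ∀ a b, a ≠ b → 2 * (s : ℝ) / 3 ≤ (N + 1) * rotAngle ((x b)⁻¹ * x a)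
  sum_le : ∀ i, ∑ k ∈ univ.erase i, (4 * s + 1) * decay s N (rotAngle ((x k)⁻¹ * x i)) ≤ ε

lemma isWellSeparated_of_lt_pow {ν b c : ℝ} (hs : 4 ≤ s) (hν : 0 < ν) (hx : ∀ a, IsSO3 (x a))
    (hsep : ∀ a b, a ≠ b → ν / ((N : ℝ) + 1) ≤ rotAngle ((x b)⁻¹ * x a))
    (hc0 : 0 < c) (hcb : c ≤ b) (hpow : b * (CConst 2 s / c) < ν ^ s) :
    IsWellSeparated s N x (c / b) := by
  have hb : 0 < b := hc0.trans_le hcb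
  have hC := CConst_pos hs
  have hCν : CConst 2 s ≤ ν ^ s :=
    calc CConst 2 s = c * (CConst 2 s / c) := by field_simp
      _ ≤ b * (CConst 2 s / c) := by gcongr
      _ ≤ ν ^ s := hpow.le
  refine ⟨hx, fun a b hab => ?_, fun i => (sum_decay_le hs hν hx hsep i).trans ?_⟩
  · exact (two_mul_div_three_le hs hν.le hCν).trans
      ((div_le_iff₀' (by positivity)).1 (hsep a b hab))
  · rw [div_le_div_iff₀ (by positivity) hb, mul_comm, ← div_le_iff₀' hc0, mul_div_assoc]
    exact hpow.le

lemma abs_sum_mul_le {ι : Type*} (S : Finset ι) (f v : ι → ℝ) {R V : ℝ} (hV : 0 ≤ V)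
    (hf : ∑ k ∈ S, |f k| ≤ R) (hv : ∀ k ∈ S, |v k| ≤ V) : |∑ k ∈ S, f k * v k| ≤ R * V :=
  calc |∑ k ∈ S, f k * v k| ≤ ∑ k ∈ S, |f k| * |v k| :=
        (abs_sum_le_sum_abs _ _).trans_eq (sum_congr rfl fun _ _ => abs_mul _ _)
    _ ≤ ∑ k ∈ S, |f k| * V := by gcongr with k hk; exact hv k hk
    _ ≤ R * V := by rw [← sum_mul]; gcongr

/-- The weighted sum over the four blocks of the sup norms of the blocks. -/
noncomputable def blockNorm (N : ℕ) (α : Fin 4 × Fin M → ℝ) : ℝ :=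
  ∑ q, blockWeight N q * ⨆ i, |α (q, i)|

lemma abs_apply_le_iSup {ι κ : Type*} [Finite κ] (α : ι × κ → ℝ) (q : ι) (i : κ) :
    |α (q, i)| ≤ ⨆ k, |α (q, k)| :=
  le_ciSup (f := fun k => |α (q, k)|) (Set.finite_range _).bddAbove i

lemma Kmat_mulVec_apply (hs : 6 ≤ s) (hev : Even s) (hN : 2 * s ≤ N) (hx : ∀ a, IsSO3 (x a))
    (α : Fin 4 × Fin M → ℝ) (p : Fin 4) (i : Fin M) :
    (Kmat s N x).mulVec α (p, i) = diagEntry s N p * α (p, i) +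
      ∑ q, ∑ k ∈ univ.erase i, Kblock s N p q (x i) (x k) * α (q, k) := by
  have hdiag : diagEntry s N p * α (p, i) = ∑ q, Kblock s N p q (x i) (x i) * α (q, i) := by
    simp [Kblock_self hs hev hN (hx i)]
  rw [hdiag, ← sum_add_distrib, Matrix.mulVec, dotProduct, Fintype.sum_prod_type]
  exact sum_congr rfl fun q _ => (add_sum_erase _ _ (mem_univ i)).symm

lemma abs_mulVec_sub_diag_le (hs : 6 ≤ s) (hev : Even s) (hN : 2 * s ≤ N)
    (hx : IsWellSeparated s N x ε) (α : Fin 4 × Fin M → ℝ) (p : Fin 4) (i : Fin M) :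
    |(Kmat s N x).mulVec α (p, i) - diagEntry s N p * α (p, i)| ≤
      blockWeight N p * ε * blockNorm N α := by
  have hblock (q : Fin 4) : |∑ k ∈ univ.erase i, Kblock s N p q (x i) (x k) * α (q, k)| ≤
      blockWeight N p * blockWeight N q * ε * ⨆ k, |α (q, k)| := by
    refine abs_sum_mul_le _ _ _ (Real.iSup_nonneg fun _ => abs_nonneg _) ?_
      fun k _ => abs_apply_le_iSup α q k
    calc ∑ k ∈ univ.erase i, |Kblock s N p q (x i) (x k)|
        ≤ ∑ k ∈ univ.erase i, blockWeight N p * blockWeight N q *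
            ((4 * s + 1) * decay s N (rotAngle ((x k)⁻¹ * x i))) :=
          sum_le_sum fun k hk => abs_Kblock_le hs hev hN (hx.isSO3 i) (hx.isSO3 k)
            (hx.le_rotAngle i k (ne_of_mem_erase hk).symm) p q
      _ ≤ blockWeight N p * blockWeight N q * ε := by
          rw [← mul_sum]
          exact mul_le_mul_of_nonneg_left (hx.sum_le i)
            (mul_pos (blockWeight_pos N p) (blockWeight_pos N q)).le
  rw [Kmat_mulVec_apply hs hev hN hx.isSO3, add_sub_cancel_left, blockNorm, mul_sum]
  exact (abs_sum_le_sum_abs _ _).trans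
    (sum_le_sum fun q _ => (hblock q).trans_eq (by ring))

variable {b c : ℝ} {α : Fin 4 × Fin M → ℝ} {u : Fin M → ℝ} {U : ℝ}

lemma abs_sub_le_blockNorm (hs : 6 ≤ s) (hev : Even s) (hN : 2 * s ≤ N)
    (hx : IsWellSeparated s N x ε) (hα : (Kmat s N x).mulVec α = rhsVec u) (i : Fin M) :
    |α (0, i) - u i| ≤ 1 / 2 * ε * blockNorm N α := by
  have h := abs_mulVec_sub_diag_le hs hev hN hx α 0 i
  rwa [hα, rhsVec, diagEntry, blockWeight, if_pos rfl, if_pos rfl, if_pos rfl, one_mul,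
    abs_sub_comm] at h

lemma abs_succ_le_blockNorm (hs : 6 ≤ s) (hev : Even s) (hN : 2 * s ≤ N)
    (hx : IsWellSeparated s N x (c / b)) (hb : 0 < b) (hc : 0 < c)
    (hdiag : c * (N + 1) ^ 2 ≤ (kernelPoly s N).derivative.eval 1)
    (hα : (Kmat s N x).mulVec α = rhsVec u) (j : Fin 3) (i : Fin M) :
    |α (j.succ, i)| ≤ blockNorm N α / (b * (N + 1)) := by
  have h := abs_mulVec_sub_diag_le hs hev hN hx α j.succ i
  rw [hα, rhsVec, diagEntry, blockWeight, if_neg j.succ_ne_zero, if_neg j.succ_ne_zero,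
    if_neg j.succ_ne_zero, zero_sub, abs_neg, abs_mul] at h
  have hpos : 0 < c * ((N : ℝ) + 1) ^ 2 := by positivity
  refine le_of_mul_le_mul_left ?_ hpos
  calc c * ((N : ℝ) + 1) ^ 2 * |α (j.succ, i)|
      ≤ |(kernelPoly s N).derivative.eval 1| * |α (j.succ, i)| := by
        gcongr
        exact hdiag.trans (le_abs_self _)
    _ ≤ (N + 1) * (c / b) * blockNorm N α := h
    _ = c * ((N : ℝ) + 1) ^ 2 * (blockNorm N α / (b * (N + 1))) := by field_simp

lemma blockNorm_nonneg (N : ℕ) (α : Fin 4 × Fin M → ℝ) : 0 ≤ blockNorm N α :=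
  sum_nonneg fun q _ => mul_nonneg (blockWeight_pos N q).le (Real.iSup_nonneg fun _ => abs_nonneg _)

lemma blockNorm_le (hs : 6 ≤ s) (hev : Even s) (hN : 2 * s ≤ N)
    (hx : IsWellSeparated s N x (c / b)) (hc : 0 < c) (hb : 3 + c / 4 < b)
    (hdiag : c * (N + 1) ^ 2 ≤ (kernelPoly s N).derivative.eval 1)
    (hα : (Kmat s N x).mulVec α = rhsVec u) (hU : 0 ≤ U) (hu : ∀ i, |u i| ≤ U) :
    blockNorm N α ≤ 2 * b * U / (4 * (b - 3) - c) := by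
  have hb0 : 0 < b := by linarith
  have hT := blockNorm_nonneg N α
  have hfun : ⨆ i, |α (0, i)| ≤ U + 1 / 2 * (c / b) * blockNorm N α :=
    Real.iSup_le (fun i => by
      linarith [abs_sub_abs_le_abs_sub (α (0, i)) (u i), hu i,
        abs_sub_le_blockNorm hs hev hN hx hα i]) (by positivity)
  have hder (j : Fin 3) : ⨆ i, |α (j.succ, i)| ≤ blockNorm N α / (b * (N + 1)) :=
    Real.iSup_le (abs_succ_le_blockNorm hs hev hN hx hb0 hc hdiag hα j) (by positivity)
  have key : blockNorm N α ≤ 1 / 2 * (U + 1 / 2 * (c / b) * blockNorm N α) +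
      ∑ _j : Fin 3, (N + 1) * (blockNorm N α / (b * (N + 1))) :=
    calc blockNorm N α
        = 1 / 2 * (⨆ i, |α (0, i)|) + ∑ j : Fin 3, (N + 1) * ⨆ i, |α (j.succ, i)| := by
          simp [blockNorm, Fin.sum_univ_succ, blockWeight]
      _ ≤ _ := by gcongr with j; exact hder j
  have hsimp : ∑ _j : Fin 3, ((N : ℝ) + 1) * (blockNorm N α / (b * (N + 1))) =
      3 * blockNorm N α / b := by
    rw [sum_const, card_univ, Fintype.card_fin, nsmul_eq_mul]
    push_cast
    field_simp
  rw [hsimp] at key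
  rw [le_div_iff₀ (by linarith)]
  field_simp at key
  linarith

lemma coefficient_estimates (hs : 6 ≤ s) (hev : Even s) (hN : 2 * s ≤ N)
    (hx : IsWellSeparated s N x (c / b)) (hc : 0 < c) (hb : 3 + c / 4 < b)
    (hdiag : c * (N + 1) ^ 2 ≤ (kernelPoly s N).derivative.eval 1)
    (hα : (Kmat s N x).mulVec α = rhsVec u) (hU : 0 ≤ U) (hu : ∀ i, |u i| ≤ U) :
    (∀ i, |α (0, i) - u i| ≤ c / (4 * (b - 3) - c) * U) ∧
    ∀ (j : Fin 3) i, |α (j.succ, i)| ≤ 2 / ((4 * (b - 3) - c) * (N + 1)) * U := by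
  have hb0 : 0 < b := by linarith
  have hD : 0 < 4 * (b - 3) - c := by linarith
  have hT := blockNorm_le hs hev hN hx hc hb hdiag hα hU hu
  refine ⟨fun i => ?_, fun j i => ?_⟩
  · calc |α (0, i) - u i| ≤ 1 / 2 * (c / b) * blockNorm N α :=
          abs_sub_le_blockNorm hs hev hN hx hα i
      _ ≤ 1 / 2 * (c / b) * (2 * b * U / (4 * (b - 3) - c)) := by gcongr
      _ = c / (4 * (b - 3) - c) * U := by field_simp
  · calc |α (j.succ, i)| ≤ blockNorm N α / (b * (N + 1)) :=
          abs_succ_le_blockNorm hs hev hN hx hb0 hc hdiag hα j i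
      _ ≤ 2 * b * U / (4 * (b - 3) - c) / (b * (N + 1)) := by gcongr
      _ = 2 / ((4 * (b - 3) - c) * (N + 1)) * U := by field_simp

lemma isUnit_Kmat (hs : 6 ≤ s) (hev : Even s) (hN : 2 * s ≤ N)
    (hx : IsWellSeparated s N x (c / b)) (hc : 0 < c) (hb : 3 + c / 4 < b)
    (hdiag : c * (N + 1) ^ 2 ≤ (kernelPoly s N).derivative.eval 1) : IsUnit (Kmat s N x) := by
  rw [← Matrix.mulVec_injective_iff_isUnit]
  refine (injective_iff_map_eq_zero (Matrix.mulVecLin (Kmat s N x))).2 fun α hα => ?_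
  have hα' : (Kmat s N x).mulVec α = rhsVec 0 := by
    rw [← Matrix.mulVecLin_apply, hα]
    funext r
    simp [rhsVec]
  obtain ⟨h0, h1⟩ := coefficient_estimates hs hev hN hx hc hb hdiag hα' le_rfl (by simp)
  funext ⟨q, i⟩
  cases q using Fin.cases with
  | zero => simpa using h0 i
  | succ j => simpa using h1 j i

end Dominance

theorem interpolation_coefficient_bounds_general {s N M : ℕ} (hs_even : Even s) (hs : 6 ≤ s)
    (hN : 2 * s ≤ N) {ν : ℝ} (hν : 0 < ν) {x : Fin M → Mat3} (hx : ∀ a, IsSO3 (x a))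
    (hsep : ∀ a b, a ≠ b → ν / ((N : ℝ) + 1) ≤ rotAngle ((x b)⁻¹ * x a))
    {b c : ℝ} (hc : c = 0.999 / (2 * ((s : ℝ) + 1))) (hb : 3 + c / 4 < b)
    (hpow : b * (CConst 2 s / c) < ν ^ s) :
    IsUnit (Kmat s N x) ∧
    ∀ u : Fin M → ℝ, (∀ i, |u i| ≤ 1) →
      ∀ α : Fin 4 × Fin M → ℝ, (Kmat s N x).mulVec α = rhsVec u →
        (⨆ i, |α (0, i)|) ≤ 1 + c / (4 * (b - 3) - c) ∧
        (∀ j : Fin 3, (⨆ i, |α (j.succ, i)|) ≤ 2 / ((4 * (b - 3) - c) * ((N : ℝ) + 1))) ∧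
        ∀ i, |α (0, i) - u i| ≤ c / (4 * (b - 3) - c) := by
  have hdiag := derivative_kernelPoly_eval_one_ge hs hs_even hN
  rw [← hc] at hdiag
  have hc0 : 0 < c := hc ▸ by positivity
  have hc1 : c ≤ 1 := by
    rw [hc, div_le_one (by positivity)]
    linarith [(Nat.cast_nonneg s : (0 : ℝ) ≤ s)]
  have hD : 0 < 4 * (b - 3) - c := by linarith
  have hwell : IsWellSeparated s N x (c / b) :=
    isWellSeparated_of_lt_pow (by omega) hν hx hsep hc0 (by linarith) hpow
  refine ⟨isUnit_Kmat hs hs_even hN hwell hc0 hb hdiag, fun u hu α hα => ?_⟩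
  obtain ⟨hfun, hder⟩ := coefficient_estimates hs hs_even hN hwell hc0 hb hdiag hα zero_le_one hu
  simp only [mul_one] at hfun hder
  refine ⟨Real.iSup_le (fun i => ?_) (by positivity),
    fun j => Real.iSup_le (hder j) (by positivity), hfun⟩
  linarith [abs_sub_abs_le_abs_sub (α (0, i)) (u i), hfun i, hu i]

theorem interpolation_coefficient_bounds
    (s N : ℕ) (hs_even : Even s) (hs : 6 ≤ s) (hN : 2 * s ≤ N)
    (ν : ℝ) (hν : π ≤ ν)
    (M : ℕ) (x : Fin M → Mat3) (hx : ∀ a, IsSO3 (x a)) (hinj : Function.Injective x)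
    (hsep : ∀ a b, a ≠ b → ν / ((N : ℝ) + 1) ≤ rotAngle ((x b)⁻¹ * (x a)))
    (b : ℝ) (hb : 3 + (0.999 / (2 * ((s : ℝ) + 1))) / 4 < b)
    (hν' : b * (CConst 2 s / (0.999 / (2 * ((s : ℝ) + 1)))) < ν ^ s) :
    IsUnit (Kmat s N x) ∧
    ∀ u : Fin M → ℝ, (∀ i, u i = 1 ∨ u i = -1) →
      ∀ α : Fin 4 × Fin M → ℝ, (Kmat s N x).mulVec α = rhsVec u →
        ((⨆ i, |α (0, i)|) ≤
            1 + (0.999 / (2 * ((s : ℝ) + 1))) /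
              (4 * (b - 3) - 0.999 / (2 * ((s : ℝ) + 1)))) ∧
        (∀ j : Fin 3, (⨆ i, |α (j.succ, i)|) ≤
            2 / ((4 * (b - 3) - 0.999 / (2 * ((s : ℝ) + 1))) * ((N : ℝ) + 1))) ∧
        (∀ i, u i = 1 →
          1 - (0.999 / (2 * ((s : ℝ) + 1))) /
              (4 * (b - 3) - 0.999 / (2 * ((s : ℝ) + 1))) ≤ α (0, i)) := by
  obtain ⟨hK, h⟩ := interpolation_coefficient_bounds_general hs_even hs hN
    (Real.pi_pos.trans_le hν) hx hsep rfl hb hν'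
  refine ⟨hK, fun u hu α hα => (h u (fun i => ?_) α hα).imp_right (And.imp_right ?_)⟩
  · rcases hu i with hi | hi <;> simp [hi]
  · exact fun hfun i hi => by linarith [(abs_le.1 (hi ▸ hfun i)).1]
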